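/- There exists a universal constant C_b > 0 (used in the penalty of VI-LCB-Game) such that for γ ∈ [1/2,1) and δ ∈ (0,1), with probability at least 1−δ over the dataset, every output of Algorithm VI-LCB-Game satisfies, entrywise: Q_pe^− ≤ Q^{μ̂,⋆}, Q_pe^+ ≥ Q^{⋆,ν̂}, V_pe^− ≤ V^{μ̂,⋆}, and V_pe^+ ≥ V^{⋆,ν̂}. -/

import Mathlib

open scoped BigOperators ENNReal Classical

noncomputable section

namespace ZSMG

variable {𝒮 𝒜 ℬ : Type} [Fintype 𝒮] [Fintype 𝒜] [Fintype ℬ]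
  [DecidableEq 𝒮] [DecidableEq 𝒜] [DecidableEq ℬ]

/-- Expectation of `V : 𝒮 → ℝ` under the (sub)probability vector `p`. -/
def Pexp (p V : 𝒮 → ℝ) : ℝ := ∑ s', p s' * V s'

/-- Variance of `V` under `p`: `Var_p(V) = p(V∘V) − (pV)²`. -/
def varP (p V : 𝒮 → ℝ) : ℝ := Pexp p (fun s => V s * V s) - (Pexp p V) ^ 2

/-- Payoff of mixed strategies `w, z` in the matrix game `M`. -/
def pay (M : 𝒜 → ℬ → ℝ) (w : 𝒜 → ℝ) (z : ℬ → ℝ) : ℝ :=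
  ∑ a, ∑ b, w a * z b * M a b

/-- Value function associated with a Q-function: minimax value at each state. -/
def valQ (Q : 𝒮 → 𝒜 → ℬ → ℝ) (s : 𝒮) : ℝ :=
  ⨆ w : stdSimplex ℝ 𝒜, ⨅ z : stdSimplex ℝ ℬ, pay (Q s) w.1 z.1

/-- Sup norm over states. -/
def supNormS (f : 𝒮 → ℝ) : ℝ := ⨆ s, |f s|

/-- Sup norm over state-action triples. -/
def supNormQ (f : 𝒮 → 𝒜 → ℬ → ℝ) : ℝ := ⨆ s, ⨆ a, ⨆ b, |f s a b|

/-- The Bernstein-style penalty `β(s,a,b;V)`; `n` is the count `N(s,a,b)` and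
`p` is the row `P̂(·|s,a,b)` of the empirical kernel. -/
def penalty (γ δ Cb : ℝ) (N n : ℕ) (p V : 𝒮 → ℝ) : ℝ :=
  (if n = 0 then 1 / (1 - γ)
   else
     min
       (max (Real.sqrt (Cb * Real.log ((N : ℝ) / ((1 - γ) * δ)) * varP p V / (n : ℝ)))
         (2 * Cb * Real.log ((N : ℝ) / ((1 - γ) * δ)) / ((1 - γ) * (n : ℝ))))
       (1 / (1 - γ))) + 4 / (N : ℝ)

/-- The pessimistic Bellman operator for the max-player. -/
def TpeMinus (γ δ Cb : ℝ) (N : ℕ) (n : 𝒮 → 𝒜 → ℬ → ℕ)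
    (Ph : 𝒮 → 𝒜 → ℬ → 𝒮 → ℝ) (rh : 𝒮 → 𝒜 → ℬ → ℝ)
    (Q : 𝒮 → 𝒜 → ℬ → ℝ) : 𝒮 → 𝒜 → ℬ → ℝ := fun s a b =>
  max (rh s a b + γ * Pexp (Ph s a b) (valQ Q)
        - penalty γ δ Cb N (n s a b) (Ph s a b) (valQ Q)) 0

/-- The pessimistic Bellman operator for the min-player. -/
def TpePlus (γ δ Cb : ℝ) (N : ℕ) (n : 𝒮 → 𝒜 → ℬ → ℕ)
    (Ph : 𝒮 → 𝒜 → ℬ → 𝒮 → ℝ) (rh : 𝒮 → 𝒜 → ℬ → ℝ)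
    (Q : 𝒮 → 𝒜 → ℬ → ℝ) : 𝒮 → 𝒜 → ℬ → ℝ := fun s a b =>
  min (rh s a b + γ * Pexp (Ph s a b) (valQ Q)
        + penalty γ δ Cb N (n s a b) (Ph s a b) (valQ Q)) (1 / (1 - γ))

/-- Count `N(s,a,b)` of occurrences of `(s,a,b)` in the dataset `D`. -/
def cnt {N : ℕ} (D : Fin N → 𝒮 × 𝒜 × ℬ × 𝒮) (s : 𝒮) (a : 𝒜) (b : ℬ) : ℕ :=
  (Finset.univ.filter fun i => (D i).1 = s ∧ (D i).2.1 = a ∧ (D i).2.2.1 = b).card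

/-- Count of full transitions `(s,a,b,s')` in the dataset `D`. -/
def cntT {N : ℕ} (D : Fin N → 𝒮 × 𝒜 × ℬ × 𝒮) (s : 𝒮) (a : 𝒜) (b : ℬ) (s' : 𝒮) : ℕ :=
  (Finset.univ.filter fun i => D i = (s, a, b, s')).card

/-- Empirical transition kernel `P̂(·|s,a,b)` built from the dataset. -/
def Phat {N : ℕ} (D : Fin N → 𝒮 × 𝒜 × ℬ × 𝒮) (s : 𝒮) (a : 𝒜) (b : ℬ) : 𝒮 → ℝ := fun s' =>
  if cnt D s a b = 0 then ((Fintype.card 𝒮 : ℝ))⁻¹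
  else (cntT D s a b s' : ℝ) / (cnt D s a b : ℝ)

/-- Empirical reward `r̂` built from the dataset. -/
def rhat {N : ℕ} (r : 𝒮 → 𝒜 → ℬ → ℝ) (D : Fin N → 𝒮 × 𝒜 × ℬ × 𝒮)
    (s : 𝒮) (a : 𝒜) (b : ℬ) : ℝ :=
  if cnt D s a b = 0 then 0 else r s a b

/-- Number of iterations `T = ⌈log(N/(1−γ))/log(1/γ)⌉` of VI-LCB-Game. -/
def Titer (γ : ℝ) (N : ℕ) : ℕ := ⌈Real.log ((N : ℝ) / (1 - γ)) / Real.log (1 / γ)⌉₊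

/-- `Q_pe^− = Q⁻_T` produced by VI-LCB-Game on the dataset `D`. -/
def QpeMinus (γ δ Cb : ℝ) (r : 𝒮 → 𝒜 → ℬ → ℝ) {N : ℕ}
    (D : Fin N → 𝒮 × 𝒜 × ℬ × 𝒮) : 𝒮 → 𝒜 → ℬ → ℝ :=
  (TpeMinus γ δ Cb N (cnt D) (Phat D) (rhat r D))^[Titer γ N] (fun _ _ _ => 0)

/-- `Q_pe^+ = Q⁺_T` produced by VI-LCB-Game on the dataset `D`. -/
def QpePlus (γ δ Cb : ℝ) (r : 𝒮 → 𝒜 → ℬ → ℝ) {N : ℕ}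
    (D : Fin N → 𝒮 × 𝒜 × ℬ × 𝒮) : 𝒮 → 𝒜 → ℬ → ℝ :=
  (TpePlus γ δ Cb N (cnt D) (Phat D) (rhat r D))^[Titer γ N] (fun _ _ _ => 1 / (1 - γ))

/-- `(w,z)` is a (mixed) Nash equilibrium / saddle point of the matrix game `M`. -/
def IsMatrixNash (M : 𝒜 → ℬ → ℝ) (w : 𝒜 → ℝ) (z : ℬ → ℝ) : Prop :=
  w ∈ stdSimplex ℝ 𝒜 ∧ z ∈ stdSimplex ℝ ℬ ∧
    (∀ w' ∈ stdSimplex ℝ 𝒜, pay M w' z ≤ pay M w z) ∧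
    (∀ z' ∈ stdSimplex ℝ ℬ, pay M w z ≤ pay M w z')

/-- `μ` is a possible max-player output of the algorithm, given the final Q-estimate `Q`. -/
def IsOutputMax (Q : 𝒮 → 𝒜 → ℬ → ℝ) (μ : 𝒮 → 𝒜 → ℝ) : Prop :=
  ∀ s, ∃ z, IsMatrixNash (Q s) (μ s) z

/-- `ν` is a possible min-player output of the algorithm, given the final Q-estimate `Q`. -/
def IsOutputMin (Q : 𝒮 → 𝒜 → ℬ → ℝ) (ν : 𝒮 → ℬ → ℝ) : Prop :=
  ∀ s, ∃ w, IsMatrixNash (Q s) w (ν s)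

/-- `μ` is a stationary (Markov) policy. -/
def IsPolicy (μ : 𝒮 → 𝒜 → ℝ) : Prop := ∀ s, μ s ∈ stdSimplex ℝ 𝒜

/-- `P` is a probability transition kernel. -/
def IsKernel (P : 𝒮 → 𝒜 → ℬ → 𝒮 → ℝ) : Prop := ∀ s a b, P s a b ∈ stdSimplex ℝ 𝒮

/-- `r` is a reward function with values in `[0,1]`. -/
def IsReward (r : 𝒮 → 𝒜 → ℬ → ℝ) : Prop := ∀ s a b, r s a b ∈ Set.Icc (0 : ℝ) 1

/-- `d` is a probability distribution over `𝒮 × 𝒜 × ℬ`. -/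
def IsDist3 (d : 𝒮 → 𝒜 → ℬ → ℝ) : Prop :=
  (∀ s a b, 0 ≤ d s a b) ∧ (∑ s, ∑ a, ∑ b, d s a b) = 1

/-- Transition matrix `P^{μ,ν}` of the product policy `μ × ν`. -/
def Pmat (P : 𝒮 → 𝒜 → ℬ → 𝒮 → ℝ) (μ : 𝒮 → 𝒜 → ℝ) (ν : 𝒮 → ℬ → ℝ) :
    Matrix 𝒮 𝒮 ℝ :=
  Matrix.of fun s s' => ∑ a, ∑ b, μ s a * ν s b * P s a b s'

/-- Reward vector `r^{μ,ν}` of the product policy `μ × ν`. -/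
def rPol (r : 𝒮 → 𝒜 → ℬ → ℝ) (μ : 𝒮 → 𝒜 → ℝ) (ν : 𝒮 → ℬ → ℝ) : 𝒮 → ℝ :=
  fun s => ∑ a, ∑ b, μ s a * ν s b * r s a b

/-- Value function `V^{μ,ν} = (I − γP^{μ,ν})⁻¹ r^{μ,ν}`. -/
def Vpol (γ : ℝ) (P : 𝒮 → 𝒜 → ℬ → 𝒮 → ℝ) (r : 𝒮 → 𝒜 → ℬ → ℝ)
    (μ : 𝒮 → 𝒜 → ℝ) (ν : 𝒮 → ℬ → ℝ) : 𝒮 → ℝ :=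
  Matrix.mulVec ((1 : Matrix 𝒮 𝒮 ℝ) - γ • Pmat P μ ν)⁻¹ (rPol r μ ν)

/-- `V^{μ,⋆}(s) = min_ν V^{μ,ν}(s)`. -/
def VmuStar (γ : ℝ) (P : 𝒮 → 𝒜 → ℬ → 𝒮 → ℝ) (r : 𝒮 → 𝒜 → ℬ → ℝ)
    (μ : 𝒮 → 𝒜 → ℝ) : 𝒮 → ℝ := fun s =>
  ⨅ ν : {ν : 𝒮 → ℬ → ℝ // IsPolicy ν}, Vpol γ P r μ ν.1 s

/-- `V^{⋆,ν}(s) = max_μ V^{μ,ν}(s)`. -/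
def VstarNu (γ : ℝ) (P : 𝒮 → 𝒜 → ℬ → 𝒮 → ℝ) (r : 𝒮 → 𝒜 → ℬ → ℝ)
    (ν : 𝒮 → ℬ → ℝ) : 𝒮 → ℝ := fun s =>
  ⨆ μ : {μ : 𝒮 → 𝒜 → ℝ // IsPolicy μ}, Vpol γ P r μ.1 ν s

/-- `Q^{μ,ν}(s,a,b) = r(s,a,b) + γ P(·|s,a,b) V^{μ,ν}`. -/
def Qpol (γ : ℝ) (P : 𝒮 → 𝒜 → ℬ → 𝒮 → ℝ) (r : 𝒮 → 𝒜 → ℬ → ℝ)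
    (μ : 𝒮 → 𝒜 → ℝ) (ν : 𝒮 → ℬ → ℝ) : 𝒮 → 𝒜 → ℬ → ℝ := fun s a b =>
  r s a b + γ * Pexp (P s a b) (Vpol γ P r μ ν)

/-- `Q^{μ,⋆}(s,a,b) = min_ν Q^{μ,ν}(s,a,b)`. -/
def QmuStar (γ : ℝ) (P : 𝒮 → 𝒜 → ℬ → 𝒮 → ℝ) (r : 𝒮 → 𝒜 → ℬ → ℝ)
    (μ : 𝒮 → 𝒜 → ℝ) : 𝒮 → 𝒜 → ℬ → ℝ := fun s a b =>
  ⨅ ν : {ν : 𝒮 → ℬ → ℝ // IsPolicy ν}, Qpol γ P r μ ν.1 s a b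

/-- `Q^{⋆,ν}(s,a,b) = max_μ Q^{μ,ν}(s,a,b)`. -/
def QstarNu (γ : ℝ) (P : 𝒮 → 𝒜 → ℬ → 𝒮 → ℝ) (r : 𝒮 → 𝒜 → ℬ → ℝ)
    (ν : 𝒮 → ℬ → ℝ) : 𝒮 → 𝒜 → ℬ → ℝ := fun s a b =>
  ⨆ μ : {μ : 𝒮 → 𝒜 → ℝ // IsPolicy μ}, Qpol γ P r μ.1 ν s a b

/-- `(μs, νs)` is a Nash equilibrium of the Markov game. -/
def IsNashPair (γ : ℝ) (P : 𝒮 → 𝒜 → ℬ → 𝒮 → ℝ) (r : 𝒮 → 𝒜 → ℬ → ℝ)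
    (μs : 𝒮 → 𝒜 → ℝ) (νs : 𝒮 → ℬ → ℝ) : Prop :=
  IsPolicy μs ∧ IsPolicy νs ∧
    (∀ μ, IsPolicy μ → ∀ s, Vpol γ P r μ νs s ≤ Vpol γ P r μs νs s) ∧
    (∀ ν, IsPolicy ν → ∀ s, Vpol γ P r μs νs s ≤ Vpol γ P r μs ν s)

/-- `V(ρ) = Σ_s ρ(s) V(s)`. -/
def wAvg (ρ V : 𝒮 → ℝ) : ℝ := ∑ s, ρ s * V s

/-- Discounted occupancy measure `d^{μ,ν}(s;ρ) = (1−γ) ρᵀ(I−γP^{μ,ν})⁻¹`. -/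
def dOcc (γ : ℝ) (P : 𝒮 → 𝒜 → ℬ → 𝒮 → ℝ) (μ : 𝒮 → 𝒜 → ℝ) (ν : 𝒮 → ℬ → ℝ)
    (ρ : 𝒮 → ℝ) : 𝒮 → ℝ := fun s =>
  (1 - γ) * Matrix.vecMul ρ ((1 : Matrix 𝒮 𝒮 ℝ) - γ • Pmat P μ ν)⁻¹ s

/-- `d^{μ,ν}(s,a,b;ρ) = d^{μ,ν}(s;ρ) μ(a|s) ν(b|s)`. -/
def dOcc3 (γ : ℝ) (P : 𝒮 → 𝒜 → ℬ → 𝒮 → ℝ) (μ : 𝒮 → 𝒜 → ℝ) (ν : 𝒮 → ℬ → ℝ)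
    (ρ : 𝒮 → ℝ) : 𝒮 → 𝒜 → ℬ → ℝ := fun s a b =>
  dOcc γ P μ ν ρ s * μ s a * ν s b

/-- Clipped unilateral concentrability coefficient `C⋆_clipped` (in `ℝ≥0∞`;
note that in `ℝ≥0∞` one has `x/0 = ∞` for `x ≠ 0` and `0/0 = 0`, matching the
convention of the paper). -/
def clipCoeff (γ : ℝ) (P : 𝒮 → 𝒜 → ℬ → 𝒮 → ℝ) (ρ : 𝒮 → ℝ) (d : 𝒮 → 𝒜 → ℬ → ℝ)
    (μs : 𝒮 → 𝒜 → ℝ) (νs : 𝒮 → ℬ → ℝ) : ℝ≥0∞ :=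
  max
    (⨆ (μ : {μ : 𝒮 → 𝒜 → ℝ // IsPolicy μ}) (s : 𝒮) (a : 𝒜) (b : ℬ),
      ENNReal.ofReal
          (min (dOcc3 γ P μ.1 νs ρ s a b)
            ((Fintype.card 𝒮 * (Fintype.card 𝒜 + Fintype.card ℬ) : ℝ))⁻¹) /
        ENNReal.ofReal (d s a b))
    (⨆ (ν : {ν : 𝒮 → ℬ → ℝ // IsPolicy ν}) (s : 𝒮) (a : 𝒜) (b : ℬ),
      ENNReal.ofReal
          (min (dOcc3 γ P μs ν.1 ρ s a b)
            ((Fintype.card 𝒮 * (Fintype.card 𝒜 + Fintype.card ℬ) : ℝ))⁻¹) /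
        ENNReal.ofReal (d s a b))

/-- Probability weight of an individual dataset under `(d_b, P)`. -/
def dsWeight {N : ℕ} (d : 𝒮 → 𝒜 → ℬ → ℝ) (P : 𝒮 → 𝒜 → ℬ → 𝒮 → ℝ)
    (D : Fin N → 𝒮 × 𝒜 × ℬ × 𝒮) : ℝ :=
  ∏ i, d (D i).1 (D i).2.1 (D i).2.2.1 * P (D i).1 (D i).2.1 (D i).2.2.1 (D i).2.2.2

/-- Probability of an event over the offline dataset. -/
def dsProb {N : ℕ} (d : 𝒮 → 𝒜 → ℬ → ℝ) (P : 𝒮 → 𝒜 → ℬ → 𝒮 → ℝ)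
    (E : Set (Fin N → 𝒮 × 𝒜 × ℬ × 𝒮)) : ℝ :=
  ∑ D : Fin N → 𝒮 × 𝒜 × ℬ × 𝒮, E.indicator (dsWeight d P) D

/-- Expectation of a function of the offline dataset. -/
def dsExp {N : ℕ} (d : 𝒮 → 𝒜 → ℬ → ℝ) (P : 𝒮 → 𝒜 → ℬ → 𝒮 → ℝ)
    (g : (Fin N → 𝒮 × 𝒜 × ℬ × 𝒮) → ℝ) : ℝ :=
  ∑ D : Fin N → 𝒮 × 𝒜 × ℬ × 𝒮, dsWeight d P D * g D

/-- Dirac (deterministic) policy for the min-player. -/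
def diracB (f : 𝒮 → ℬ) : 𝒮 → ℬ → ℝ := fun s b => if b = f s then 1 else 0

/-- Binomial pmf. -/
def binomPMF (n : ℕ) (p : ℝ) (k : ℕ) : ℝ :=
  (n.choose k : ℝ) * p ^ k * (1 - p) ^ (n - k)

/-- Probability of a set of outcomes under a `Binomial(n,p)` distribution. -/
def binomProb (n : ℕ) (p : ℝ) (E : Set ℕ) : ℝ :=
  ∑ k ∈ Finset.range (n + 1), E.indicator (binomPMF n p) k

/-- Weight of an i.i.d. sample from a distribution on a finite set. -/
def iidWeight {𝒳 : Type} {N : ℕ} (d : 𝒳 → ℝ) (ω : Fin N → 𝒳) : ℝ := ∏ i, d (ω i)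

/-- Probability of an event for `N` i.i.d. draws from `d`. -/
def iidProb {𝒳 : Type} [Fintype 𝒳] {N : ℕ} (d : 𝒳 → ℝ) (E : Set (Fin N → 𝒳)) : ℝ :=
  ∑ ω : Fin N → 𝒳, E.indicator (iidWeight d) ω

/-- Number of occurrences of `x` in the sample `ω`. -/
def iidCount {𝒳 : Type} [DecidableEq 𝒳] {N : ℕ} (ω : Fin N → 𝒳) (x : 𝒳) : ℕ :=
  (Finset.univ.filter fun i => ω i = x).card

/-- Transition kernel of the hard instance `ℳ𝒢_θ`. -/
def hardP {S A B : ℕ} (θ : Fin A → ℝ) : Fin S → Fin A → Fin B → Fin S → ℝ :=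
  fun s a b s' =>
    if s.val = 0 ∧ b.val = 0 then
      θ a * (if s'.val = 0 then 1 else 0) + (1 - θ a) * (if s'.val = 1 then 1 else 0)
    else if s' = s then 1 else 0

/-- Reward of the hard instance: `r(s,a,b) = 1{s = 0}`. -/
def hardR {S A B : ℕ} : Fin S → Fin A → Fin B → ℝ := fun s _ _ => if s.val = 0 then 1 else 0

end ZSMG

/-!
The penalty is a Bernstein width, and on values with range at most `1 / (1 - γ)` it grows at most
half as fast as the expectation. For `γ ≥ 1 / 2` the pessimistic backup is therefore monotone and
discounted, so its iterates from `0` increase and the last one is a fixed point up to `1 / N`.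

Pessimism needs the empirical mean of the estimate to exceed its true mean by at most the penalty.
The obstacle is that the estimate depends on the same samples as the empirical kernel. Freezing its
value at the state `s` to a constant removes all dependence on the next states drawn at `s`; a grid
of `N + 1` constants suffices to approximate the estimate, and a union bound is taken over the grid.
Conditionally on the visited triples, `exp (y - y ^ 2) ≤ 1 + y` bounds an exponential moment of each
frozen value, and tuning the scale of `y` turns this into Bernstein's inequality with the empirical
variance.

On the resulting event the lower estimate is a subsolution of the true Bellman equation of `μ̂`
against every opponent, hence lies below its solution. The upper estimate is the lower one of the
game with payoffs reflected in `1 / (1 - γ)`, in which the opponent evaluates the matrix games.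
-/

namespace ZSMG

/-! ### Expectation and variance under a probability vector -/

section Expectation

variable {𝒮 : Type} [Fintype 𝒮] {p q V W : 𝒮 → ℝ} {c H η : ℝ}

lemma Pexp_add (p V W : 𝒮 → ℝ) : Pexp p (fun s => V s + W s) = Pexp p V + Pexp p W :=
  dotProduct_add p V W

lemma Pexp_sub (p V W : 𝒮 → ℝ) : Pexp p (fun s => V s - W s) = Pexp p V - Pexp p W :=
  dotProduct_sub p V W

lemma Pexp_const_mul (p : 𝒮 → ℝ) (c : ℝ) (V : 𝒮 → ℝ) :
    Pexp p (fun s => c * V s) = c * Pexp p V :=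
  dotProduct_smul c p V

lemma Pexp_const (hp : p ∈ stdSimplex ℝ 𝒮) (c : ℝ) : Pexp p (fun _ => c) = c := by
  rw [Pexp, ← Finset.sum_mul, hp.2, one_mul]

lemma Pexp_add_const (hp : p ∈ stdSimplex ℝ 𝒮) (V : 𝒮 → ℝ) (c : ℝ) :
    Pexp p (fun s => V s + c) = Pexp p V + c := by
  rw [Pexp_add p V fun _ => c, Pexp_const hp]

lemma Pexp_sub_const (hp : p ∈ stdSimplex ℝ 𝒮) (V : 𝒮 → ℝ) (c : ℝ) :
    Pexp p (fun s => V s - c) = Pexp p V - c := by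
  rw [Pexp_sub p V fun _ => c, Pexp_const hp]

lemma Pexp_const_sub (hp : p ∈ stdSimplex ℝ 𝒮) (c : ℝ) (V : 𝒮 → ℝ) :
    Pexp p (fun s => c - V s) = c - Pexp p V := by
  rw [Pexp_sub p (fun _ => c) V, Pexp_const hp]

lemma Pexp_mono (hp : ∀ s, 0 ≤ p s) (h : ∀ s, V s ≤ W s) : Pexp p V ≤ Pexp p W :=
  Finset.sum_le_sum fun s _ => mul_le_mul_of_nonneg_left (h s) (hp s)

lemma Pexp_nonneg (hp : ∀ s, 0 ≤ p s) (hV : ∀ s, 0 ≤ V s) : 0 ≤ Pexp p V :=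
  Finset.sum_nonneg fun s _ => mul_nonneg (hp s) (hV s)

lemma Pexp_le (hp : p ∈ stdSimplex ℝ 𝒮) (h : ∀ s, V s ≤ c) : Pexp p V ≤ c :=
  (Pexp_mono hp.1 h).trans_eq (Pexp_const hp c)

lemma le_Pexp (hp : p ∈ stdSimplex ℝ 𝒮) (h : ∀ s, c ≤ V s) : c ≤ Pexp p V :=
  (Pexp_const hp c).symm.trans_le (Pexp_mono hp.1 h)

lemma Pexp_sub_Pexp_le (hp : p ∈ stdSimplex ℝ 𝒮) (hq : q ∈ stdSimplex ℝ 𝒮)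
    (hV : ∀ s, V s ∈ Set.Icc 0 H) : Pexp p V - Pexp q V ≤ H := by
  linarith [Pexp_le hp fun s => (hV s).2, Pexp_nonneg hq.1 fun s => (hV s).1]

lemma Pexp_sub_Pexp_le_add (hp : p ∈ stdSimplex ℝ 𝒮) (hq : q ∈ stdSimplex ℝ 𝒮)
    (h : ∀ s, |V s - W s| ≤ η) : Pexp p W - Pexp q W ≤ Pexp p V - Pexp q V + 2 * η := by
  have hpW : Pexp p (fun s => W s - V s) ≤ η :=
    Pexp_le hp fun s => by linarith [(abs_le.1 (h s)).1]
  have hqV : Pexp q (fun s => V s - W s) ≤ η := Pexp_le hq fun s => (abs_le.1 (h s)).2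
  rw [Pexp_sub] at hpW hqV
  linarith

lemma Pexp_sq_sub (hp : p ∈ stdSimplex ℝ 𝒮) (V : 𝒮 → ℝ) (c : ℝ) :
    Pexp p (fun s => (V s - c) ^ 2) = varP p V + (Pexp p V - c) ^ 2 := by
  have hexpand : (fun s => (V s - c) ^ 2) = fun s => (V s * V s - 2 * c * V s) + c ^ 2 := by
    funext s; ring
  rw [hexpand, Pexp_add_const hp, Pexp_sub, Pexp_const_mul, varP]
  ring

lemma varP_eq_Pexp_sq_sub (hp : p ∈ stdSimplex ℝ 𝒮) (V : 𝒮 → ℝ) :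
    varP p V = Pexp p (fun s => (V s - Pexp p V) ^ 2) := by
  rw [Pexp_sq_sub hp, sub_self, zero_pow two_ne_zero, add_zero]

lemma varP_nonneg (hp : p ∈ stdSimplex ℝ 𝒮) (V : 𝒮 → ℝ) : 0 ≤ varP p V := by
  rw [varP_eq_Pexp_sq_sub hp]
  exact Pexp_nonneg hp.1 fun s => sq_nonneg _

lemma varP_add_const (hp : p ∈ stdSimplex ℝ 𝒮) (V : 𝒮 → ℝ) (c : ℝ) :
    varP p (fun s => V s + c) = varP p V := by
  simp only [varP_eq_Pexp_sq_sub hp, Pexp_add_const hp, add_sub_add_right_eq_sub]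

lemma varP_const_sub (hp : p ∈ stdSimplex ℝ 𝒮) (c : ℝ) (V : 𝒮 → ℝ) :
    varP p (fun s => c - V s) = varP p V := by
  simp only [varP_eq_Pexp_sq_sub hp, Pexp_const_sub hp, sub_sub_sub_cancel_left]
  exact congrArg (Pexp p) (funext fun s => by ring)

lemma varP_le_sq (hp : p ∈ stdSimplex ℝ 𝒮) (hV : ∀ s, V s ∈ Set.Icc 0 H) :
    varP p V ≤ H ^ 2 := by
  have hsq : Pexp p (fun s => (V s - 0) ^ 2) ≤ H ^ 2 := Pexp_le hp fun s => by
    rw [sub_zero]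
    exact pow_le_pow_left₀ (hV s).1 (hV s).2 2
  rw [Pexp_sq_sub hp] at hsq
  linarith [sq_nonneg (Pexp p V - 0)]

lemma varP_le_two_mul_add (hp : p ∈ stdSimplex ℝ 𝒮) (h : ∀ s, |V s - W s| ≤ η) :
    varP p V ≤ 2 * varP p W + 2 * η ^ 2 := by
  calc varP p V ≤ Pexp p (fun s => (V s - Pexp p W) ^ 2) := by
        rw [Pexp_sq_sub hp]
        exact le_add_of_nonneg_right (sq_nonneg _)
    _ ≤ Pexp p (fun s => 2 * (W s - Pexp p W) ^ 2 + 2 * η ^ 2) := Pexp_mono hp.1 fun s => by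
        have hη : (V s - W s) ^ 2 ≤ η ^ 2 := sq_le_sq' (abs_le.1 (h s)).1 (abs_le.1 (h s)).2
        have hsplit := add_sq_le (a := V s - W s) (b := W s - Pexp p W)
        rw [sub_add_sub_cancel] at hsplit
        linarith
    _ = 2 * varP p W + 2 * η ^ 2 := by
        rw [Pexp_add_const hp, Pexp_const_mul, varP_eq_Pexp_sq_sub hp]

lemma varP_sub_varP_le (hp : p ∈ stdSimplex ℝ 𝒮) (hle : ∀ s, V s ≤ W s)
    (hosc : ∀ s t, W s - W t ≤ H) :
    varP p W - varP p V ≤ 2 * H * (Pexp p W - Pexp p V) := by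
  have hpt : ∀ s, (W s - Pexp p W) ^ 2 + (W s - V s - 0) ^ 2 ≤
      2 * H * (W s - V s) + (V s - Pexp p W) ^ 2 := fun s => by
    have hdev : W s - Pexp p W ≤ H := by
      linarith [le_Pexp (c := W s - H) hp fun t => sub_le_comm.1 (hosc s t)]
    nlinarith [mul_le_mul_of_nonneg_right hdev (sub_nonneg.2 (hle s))]
  have hexp := Pexp_mono hp.1 hpt
  rw [Pexp_add p (fun s => _) (fun s => _), Pexp_add p (fun s => _) (fun s => _),
    Pexp_const_mul, Pexp_sub, Pexp_sq_sub hp, Pexp_sq_sub hp, Pexp_sq_sub hp, Pexp_sub] at hexp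
  nlinarith [varP_nonneg hp fun s => W s - V s]

end Expectation

/-! ### Scalar inequalities -/

lemma exp_sub_sq_le_one_add {y : ℝ} (hy : -(1 / 2) ≤ y) : Real.exp (y - y ^ 2) ≤ 1 + y := by
  have hpos : 0 < 1 + y := by linarith
  suffices hinv : 1 ≤ (1 + y) * Real.exp (y ^ 2 - y) by
    rw [← neg_sub, Real.exp_neg]
    exact (inv_le_iff_one_le_mul₀ (Real.exp_pos _)).2 hinv
  rcases le_total 0 y with h | h
  · nlinarith [pow_nonneg h 3, Real.add_one_le_exp (y ^ 2 - y)]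
  · have hquad : 1 + (y ^ 2 - y) + (y ^ 2 - y) ^ 2 / 2 ≤ Real.exp (y ^ 2 - y) :=
      Real.quadratic_le_exp_of_nonneg (by nlinarith)
    have hcubic : 0 ≤ (1 + y) * (1 - y) ^ 2 + 2 * y := by nlinarith [sq_nonneg (y + 1 / 2)]
    nlinarith [mul_le_mul_of_nonneg_left hquad hpos.le, mul_nonneg (sq_nonneg y) hcubic]

lemma exists_nat_mul_add_div_le {a b : ℝ} {n : ℕ} (ha : 0 < a) (hn : 1 ≤ n)
    (hb : b ≤ a * n ^ 2) :
    ∃ j : ℕ, 1 ≤ j ∧ j ≤ n ∧ a * j + b / j ≤ max (3 * √(a * b)) (2 * a) := by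
  rcases le_or_gt b a with hba | hab
  · refine ⟨1, le_rfl, hn, le_max_of_le_right ?_⟩
    rw [Nat.cast_one, mul_one, div_one]
    linarith
  have hb0 : 0 < b := ha.trans hab
  set ρ := √(b / a)
  have hρ1 : 1 < ρ := Real.lt_sqrt_of_sq_lt (by rwa [one_pow, one_lt_div ha])
  have hρ0 : 0 < ρ := one_pos.trans hρ1
  have hρn : ρ ≤ n := Real.sqrt_le_left (by positivity) |>.2 ((div_le_iff₀' ha).2 hb)
  have hρsq : ρ ^ 2 = b / a := Real.sq_sqrt (by positivity)
  have haρ : a * ρ = √(a * b) := by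
    rw [eq_comm, Real.sqrt_eq_iff_mul_self_eq (by positivity) (by positivity)]
    rw [mul_mul_mul_comm, ← sq ρ, hρsq]
    field_simp
  have hbρ : b / ρ = √(a * b) := by
    rw [← haρ, div_eq_iff hρ0.ne', mul_assoc, ← sq ρ, hρsq, mul_div_cancel₀ _ ha.ne']
  have hceil : (⌈ρ⌉₊ : ℝ) ≤ 2 * ρ := by linarith [Nat.ceil_lt_add_one hρ0.le]
  refine ⟨⌈ρ⌉₊, Nat.one_le_ceil_iff.2 hρ0, Nat.ceil_le.2 hρn, le_max_of_le_left ?_⟩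
  calc a * ⌈ρ⌉₊ + b / ⌈ρ⌉₊ ≤ a * (2 * ρ) + b / ρ := by gcongr; exact Nat.le_ceil ρ
    _ = 3 * √(a * b) := by rw [hbρ, mul_left_comm, haρ]; ring

lemma max_sub_max_le_half {a a' m D : ℝ} (hm : 0 < m) (hD : 0 ≤ D)
    (h : a' ^ 2 - a ^ 2 ≤ m * D) (ha : 0 ≤ a) : max a' m - max a m ≤ D / 2 := by
  rcases le_or_gt a' (max a m) with hle | hlt
  · linarith [max_le hle (le_max_right a m)]
  · have hmM : m ≤ max a m := le_max_right a m
    have haM : a ≤ max a m := le_max_left a m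
    rw [max_eq_left (hmM.trans hlt.le)]
    by_contra! hcon
    have hpos : 0 ≤ a' - max a m := by linarith
    nlinarith [mul_pos hm (sub_pos.2 hlt), mul_nonneg hpos (sub_nonneg.2 hmM)]

lemma one_add_mul_one_div_one_sub {γ : ℝ} (hγ : γ < 1) :
    1 + γ * (1 / (1 - γ)) = 1 / (1 - γ) := by
  have : 1 - γ ≠ 0 := (sub_pos.2 hγ).ne'
  field_simp
  ring

/-! ### An empirical Bernstein inequality from self-normalised deviations -/

section Bernstein

variable {𝒮 : Type} [Fintype 𝒮] {p q V : 𝒮 → ℝ} {l H L : ℝ} {n : ℕ}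

/-- Increment of the self-normalised process for the centred variable `Y = V - q V`: the log-moment
generating function of `l Y` is compensated by the observed square `(l Y)²`, rather than by its
unknown expectation. -/
def selfNorm (l : ℝ) (q V : 𝒮 → ℝ) (t : 𝒮) : ℝ :=
  l * (V t - Pexp q V) - (l * (V t - Pexp q V)) ^ 2

lemma Pexp_exp_selfNorm_le_one (hq : q ∈ stdSimplex ℝ 𝒮) (hV : ∀ s, V s ∈ Set.Icc 0 H)
    (hl : 0 ≤ l) (hlH : l * H ≤ 1 / 2) : Pexp q (fun t => Real.exp (selfNorm l q V t)) ≤ 1 := by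
  calc Pexp q (fun t => Real.exp (selfNorm l q V t))
      ≤ Pexp q (fun t => 1 + l * (V t - Pexp q V)) := by
        refine Pexp_mono hq.1 fun t => exp_sub_sq_le_one_add ?_
        have hmean : l * Pexp q V ≤ l * H := by
          gcongr
          exact Pexp_le hq fun s => (hV s).2
        nlinarith [mul_nonneg hl (hV t).1]
    _ = 1 := by
        rw [Pexp_add q fun _ => 1, Pexp_const hq, Pexp_const_mul, Pexp_sub_const hq, sub_self,
          mul_zero, add_zero]

lemma Pexp_selfNorm (hp : p ∈ stdSimplex ℝ 𝒮) (q V : 𝒮 → ℝ) (l : ℝ) :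
    Pexp p (selfNorm l q V) = l * (Pexp p V - Pexp q V) -
      l ^ 2 * (varP p V + (Pexp p V - Pexp q V) ^ 2) := by
  have hexpand : selfNorm l q V =
      fun s => l * (V s - Pexp q V) - l ^ 2 * (V s - Pexp q V) ^ 2 := by
    funext s
    rw [selfNorm, mul_pow]
  rw [hexpand, Pexp_sub p, Pexp_const_mul, Pexp_const_mul, Pexp_sub_const hp, Pexp_sq_sub hp]

lemma Pexp_sub_le_of_mul_Pexp_selfNorm_le (hp : p ∈ stdSimplex ℝ 𝒮) (hn : 1 ≤ n) (hL : 0 ≤ L)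
    (hl : 0 < l) (hlx : l * (Pexp p V - Pexp q V) ≤ 1 / 2)
    (h : n * Pexp p (selfNorm l q V) ≤ L) :
    Pexp p V - Pexp q V ≤ 2 * L / (n * l) + 2 * l * varP p V := by
  have hn0 : (0 : ℝ) < n := by exact_mod_cast hn
  have hσ := varP_nonneg hp V
  rw [Pexp_selfNorm hp] at h
  set x := Pexp p V - Pexp q V
  rcases le_or_gt x 0 with hx | hx
  · exact hx.trans (by positivity)
  have hhalf : l ^ 2 * x ^ 2 ≤ l * x / 2 := by nlinarith [mul_pos hl hx]
  have hsplit : 2 * L / (n * l) + 2 * l * varP p V =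
      2 * (L + n * (l ^ 2 * varP p V)) / (n * l) := by
    field_simp
  rw [hsplit, le_div_iff₀ (by positivity)]
  nlinarith

lemma empirical_bernstein (hp : p ∈ stdSimplex ℝ 𝒮) (hq : q ∈ stdSimplex ℝ 𝒮) (hn : 1 ≤ n)
    (hH : 0 < H) (hL : 1 / 4 ≤ L) (hV : ∀ s, V s ∈ Set.Icc 0 H)
    (hdev : ∀ j : ℕ, 1 ≤ j → j ≤ n → n * Pexp p (selfNorm (1 / (2 * H * j)) q V) ≤ L) :
    Pexp p V - Pexp q V ≤ max (6 * √(L * varP p V / n)) (8 * H * L / n) := by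
  have hn1 : (1 : ℝ) ≤ n := by exact_mod_cast hn
  have : (0 : ℝ) < n := one_pos.trans_le hn1
  have hL0 : 0 < L := by linarith
  have hσ_le : varP p V / H ≤ 4 * H * L / n * n ^ 2 := by
    rw [div_le_iff₀ hH]
    calc varP p V ≤ H ^ 2 * (1 * 1) := by simpa using varP_le_sq hp hV
      _ ≤ H ^ 2 * (4 * L * n) := by gcongr; linarith
      _ = 4 * H * L / n * n ^ 2 * H := by field_simp
  obtain ⟨j, hj, hjn, hmin⟩ := exists_nat_mul_add_div_le (by positivity) hn hσ_le
  have hj1 : (1 : ℝ) ≤ j := by exact_mod_cast hj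
  have : (0 : ℝ) < j := one_pos.trans_le hj1
  have hlx : 1 / (2 * H * j) * (Pexp p V - Pexp q V) ≤ 1 / 2 := by
    rw [div_mul_eq_mul_div, one_mul, div_le_div_iff₀ (by positivity) two_pos]
    nlinarith [Pexp_sub_Pexp_le hp hq hV]
  calc Pexp p V - Pexp q V
      ≤ 2 * L / (n * (1 / (2 * H * j))) + 2 * (1 / (2 * H * j)) * varP p V :=
        Pexp_sub_le_of_mul_Pexp_selfNorm_le hp hn hL0.le (by positivity) hlx (hdev j hj hjn)
    _ = 4 * H * L / n * j + varP p V / H / j := by field_simp; ring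
    _ ≤ max (3 * √(4 * H * L / n * (varP p V / H))) (2 * (4 * H * L / n)) := hmin
    _ = max (6 * √(L * varP p V / n)) (8 * H * L / n) := by
        congr 1
        · have hprod : 4 * H * L / n * (varP p V / H) = 2 ^ 2 * (L * varP p V / n) := by
            field_simp
            ring
          rw [hprod, Real.sqrt_mul (by positivity), Real.sqrt_sq two_pos.le]
          ring
        · ring

end Bernstein

/-! ### The penalty -/

section Penalty

variable {𝒮 : Type} [Fintype 𝒮] {p q U V W : 𝒮 → ℝ} {γ δ Cb C H L : ℝ} {N n : ℕ}

/-- The untruncated Bernstein confidence width with log-factor `C`, for `n` observations of a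
variable with range `H`. -/
def bernsteinWidth (C H : ℝ) (n : ℕ) (p V : 𝒮 → ℝ) : ℝ :=
  max (√(C * varP p V / n)) (2 * C * H / n)

lemma bernsteinWidth_nonneg (C H : ℝ) (n : ℕ) (p V : 𝒮 → ℝ) : 0 ≤ bernsteinWidth C H n p V :=
  le_max_of_le_left (Real.sqrt_nonneg _)

lemma bernsteinWidth_sub_le (hp : p ∈ stdSimplex ℝ 𝒮) (hC : 0 < C) (hH : 0 < H) (hn : 1 ≤ n)
    (hle : ∀ s, V s ≤ W s) (hosc : ∀ s t, W s - W t ≤ H) :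
    bernsteinWidth C H n p W - bernsteinWidth C H n p V ≤ (Pexp p W - Pexp p V) / 2 := by
  have hn0 : (0 : ℝ) < n := by exact_mod_cast hn
  have hsq : ∀ Y : 𝒮 → ℝ, √(C * varP p Y / n) ^ 2 = C * varP p Y / n := fun Y =>
    Real.sq_sqrt (div_nonneg (mul_nonneg hC.le (varP_nonneg hp Y)) hn0.le)
  refine max_sub_max_le_half (by positivity) (sub_nonneg.2 (Pexp_mono hp.1 hle)) ?_
    (Real.sqrt_nonneg _)
  rw [hsq, hsq]
  calc C * varP p W / n - C * varP p V / n = C / n * (varP p W - varP p V) := by ring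
    _ ≤ C / n * (2 * H * (Pexp p W - Pexp p V)) := by gcongr; exact varP_sub_varP_le hp hle hosc
    _ = 2 * C * H / n * (Pexp p W - Pexp p V) := by ring

lemma div_le_two_mul_mul_div (hH : 0 ≤ H) (hL : 1 / 2 ≤ L) (n : ℕ) :
    H / n ≤ 2 * (L * H / n) := by
  calc H / n ≤ 2 * L * H / n := by gcongr; nlinarith
    _ = 2 * (L * H / n) := by ring

lemma mul_varP_div_le_of_abs_sub_le (hp : p ∈ stdSimplex ℝ 𝒮) (hH : 0 ≤ H) (hL : 1 / 2 ≤ L)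
    (hn : 1 ≤ n) (hUW : ∀ s, |U s - W s| ≤ 2 * H / n) :
    3 * L * varP p U / n ≤ 6 * (L * varP p W / n) + 48 * (L * H / n) ^ 2 := by
  have : (1 : ℝ) ≤ n := by exact_mod_cast hn
  calc 3 * L * varP p U / n ≤ 3 * L * (2 * varP p W + 2 * (2 * H / n) ^ 2) / n := by
        gcongr
        exact varP_le_two_mul_add hp hUW
    _ = 6 * (L * varP p W / n) + 24 * (L * H / n * (H / n)) / n := by ring
    _ ≤ 6 * (L * varP p W / n) + 24 * (L * H / n * (2 * (L * H / n))) / 1 := by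
        gcongr
        exact div_le_two_mul_mul_div hH hL n
    _ = 6 * (L * varP p W / n) + 48 * (L * H / n) ^ 2 := by ring

/-- The constant `256` leaves room for both the square-root term (`6 √3 < √256`) and the error
`4 H / n` of replacing `W` by `U`. -/
lemma max_bernstein_add_le_bernsteinWidth (hp : p ∈ stdSimplex ℝ 𝒮) (hH : 0 ≤ H) (hL : 1 / 2 ≤ L)
    (hC : 256 * L ≤ C) (hn : 1 ≤ n) (hUW : ∀ s, |U s - W s| ≤ 2 * H / n) :
    max (6 * √(3 * L * varP p U / n)) (8 * H * (3 * L) / n) + 2 * (2 * H / n) ≤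
      bernsteinWidth C H n p W := by
  have hσ := varP_nonneg hp W
  set B := bernsteinWidth C H n p W
  have hB0 : 0 ≤ B := bernsteinWidth_nonneg ..
  have hBlin : 512 * (L * H / n) ≤ B := by
    calc 512 * (L * H / n) = 2 * (256 * L) * H / n := by ring
      _ ≤ 2 * C * H / n := by gcongr
      _ ≤ B := le_max_right _ _
  have hBsq : 256 * (L * varP p W / n) ≤ B ^ 2 := by
    calc 256 * (L * varP p W / n) = 256 * L * varP p W / n := by ring
      _ ≤ C * varP p W / n := by gcongr
      _ ≤ B ^ 2 := (Real.sqrt_le_left hB0).1 (le_max_left _ _)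
  have hsqrt : √(3 * L * varP p U / n) ≤ 5 / 32 * B := by
    refine Real.sqrt_le_left (by positivity) |>.2
      ((mul_varP_div_le_of_abs_sub_le hp hH hL hn hUW).trans ?_)
    nlinarith [pow_le_pow_left₀ (by positivity) hBlin 2]
  have hlin : 8 * H * (3 * L) / n ≤ 15 / 16 * B := by
    calc 8 * H * (3 * L) / n = 24 * (L * H / n) := by ring
      _ ≤ 15 / 16 * B := by linarith
  have hmax := max_le (show 6 * √(3 * L * varP p U / n) ≤ 15 / 16 * B by linarith) hlin
  linarith [mul_div_assoc 2 H (n : ℝ), div_le_two_mul_mul_div hH hL n]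

lemma penalty_of_ne_zero (hn : n ≠ 0) : penalty γ δ Cb N n p V =
    min (bernsteinWidth (Cb * Real.log (N / ((1 - γ) * δ))) (1 / (1 - γ)) n p V) (1 / (1 - γ)) +
      4 / N := by
  rw [penalty, if_neg hn, bernsteinWidth, mul_one_div, div_div, mul_assoc 2 Cb]

lemma one_div_one_sub_le_penalty_zero : 1 / (1 - γ) ≤ penalty γ δ Cb N 0 p V := by
  rw [penalty, if_pos rfl]
  exact le_add_of_nonneg_right (by positivity)

lemma penalty_nonneg (hγ : γ ≤ 1) : 0 ≤ penalty γ δ Cb N n p V := by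
  have hH : 0 ≤ 1 / (1 - γ) := one_div_nonneg.2 (sub_nonneg.2 hγ)
  rcases eq_or_ne n 0 with rfl | hn
  · exact hH.trans one_div_one_sub_le_penalty_zero
  · rw [penalty_of_ne_zero hn]
    exact add_nonneg (le_min (bernsteinWidth_nonneg ..) hH) (by positivity)

lemma penalty_congr (h : varP p V = varP p W) :
    penalty γ δ Cb N n p V = penalty γ δ Cb N n p W := by
  simp only [penalty, h]

lemma penalty_sub_penalty_le (hγ : γ < 1) (hp : p ∈ stdSimplex ℝ 𝒮)
    (hC : n ≠ 0 → 0 < Cb * Real.log (N / ((1 - γ) * δ))) (hle : ∀ s, V s ≤ W s)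
    (hosc : ∀ s t, W s - W t ≤ 1 / (1 - γ)) :
    penalty γ δ Cb N n p W - penalty γ δ Cb N n p V ≤ (Pexp p W - Pexp p V) / 2 := by
  have hD : 0 ≤ Pexp p W - Pexp p V := sub_nonneg.2 (Pexp_mono hp.1 hle)
  rcases eq_or_ne n 0 with rfl | hn
  · rw [penalty, penalty, if_pos rfl, if_pos rfl, sub_self]
    linarith
  · have hwidth := bernsteinWidth_sub_le hp (hC hn) (one_div_pos.2 (sub_pos.2 hγ))
      (Nat.one_le_iff_ne_zero.2 hn) hle hosc
    rw [penalty_of_ne_zero hn, penalty_of_ne_zero hn, add_sub_add_right_eq_sub, sub_le_iff_le_add,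
      ← min_add_add_left]
    exact min_le_min (by linarith) (by linarith)

lemma mul_Pexp_sub_le_penalty (hp : p ∈ stdSimplex ℝ 𝒮) (hq : q ∈ stdSimplex ℝ 𝒮) (hγ : 0 ≤ γ)
    (hγ1 : γ < 1) (hCb : 256 ≤ Cb) (hn : n ≠ 0) (hL : 1 / 2 ≤ Real.log (N / ((1 - γ) * δ)))
    (hW : ∀ s, W s ∈ Set.Icc 0 (1 / (1 - γ))) (hU : ∀ s, U s ∈ Set.Icc 0 (1 / (1 - γ)))
    (hUW : ∀ s, |U s - W s| ≤ 2 * (1 / (1 - γ)) / n)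
    (hdev : ∀ j : ℕ, 1 ≤ j → j ≤ n → n * Pexp p (selfNorm (1 / (2 * (1 / (1 - γ)) * j)) q U) ≤
      3 * Real.log (N / ((1 - γ) * δ))) :
    γ * (Pexp p W - Pexp q W) ≤ penalty γ δ Cb N n p W := by
  rcases le_or_gt (Pexp p W - Pexp q W) 0 with hx | hx
  · exact (mul_nonpos_of_nonneg_of_nonpos hγ hx).trans (penalty_nonneg hγ1.le)
  have hn1 : 1 ≤ n := Nat.one_le_iff_ne_zero.2 hn
  have hH : 0 < 1 / (1 - γ) := one_div_pos.2 (sub_pos.2 hγ1)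
  rw [penalty_of_ne_zero hn]
  set L := Real.log (N / ((1 - γ) * δ))
  set H := 1 / (1 - γ)
  have hwidth : Pexp p W - Pexp q W ≤ bernsteinWidth (Cb * L) H n p W := by
    calc Pexp p W - Pexp q W ≤ Pexp p U - Pexp q U + 2 * (2 * H / n) :=
          Pexp_sub_Pexp_le_add hp hq hUW
      _ ≤ max (6 * √(3 * L * varP p U / n)) (8 * H * (3 * L) / n) + 2 * (2 * H / n) := by
          gcongr
          exact empirical_bernstein hp hq hn1 hH (by linarith) hU hdev
      _ ≤ bernsteinWidth (Cb * L) H n p W :=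
          max_bernstein_add_le_bernsteinWidth hp hH.le hL (by gcongr) hn1 hUW
  calc γ * (Pexp p W - Pexp q W) ≤ Pexp p W - Pexp q W := mul_le_of_le_one_left hx.le hγ1.le
    _ ≤ min (bernsteinWidth (Cb * L) H n p W) H := le_min hwidth (Pexp_sub_Pexp_le hp hq hW)
    _ ≤ _ := le_add_of_nonneg_right (by positivity)

end Penalty

/-! ### The law of the dataset -/

section ProductWeights

variable {ι : Type*} {X : Type} [Fintype ι] [DecidableEq ι] [Fintype X] {p : ι → X → ℝ}

lemma prod_mem_stdSimplex (hp : ∀ i, p i ∈ stdSimplex ℝ X) :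
    (fun y : ι → X => ∏ i, p i (y i)) ∈ stdSimplex ℝ (ι → X) := by
  refine ⟨fun y => Finset.prod_nonneg fun i _ => (hp i).1 _, ?_⟩
  rw [← Fintype.prod_sum]
  exact Finset.prod_eq_one fun i _ => (hp i).2

lemma sum_prod_mul_prod_filter_le_one [Nonempty X] (hp : ∀ i, p i ∈ stdSimplex ℝ X)
    {I : ι → Prop} [DecidablePred I] {h : (ι → X) → X → ℝ} (hh : ∀ y t, 0 ≤ h y t)
    (hloc : ∀ y y', (∀ i, ¬ I i → y i = y' i) → h y = h y')
    (hmean : ∀ y i, I i → Pexp (p i) (h y) ≤ 1) :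
    ∑ y : ι → X, (∏ i, p i (y i)) * ∏ i with I i, h y (y i) ≤ 1 := by
  let e := Equiv.piEquivPiSubtypeProd I fun _ : ι => X
  have he_pos : ∀ u v (i : {i // I i}), e.symm (u, v) i = u i := fun u v i => dif_pos i.2
  have he_neg : ∀ u v (i : {i // ¬ I i}), e.symm (u, v) i = v i := fun u v i => dif_neg i.2
  let u₀ : {i // I i} → X := fun _ => Classical.arbitrary X
  have hfactor : ∀ u v, (∏ i, p i (e.symm (u, v) i)) *
      ∏ i with I i, h (e.symm (u, v)) (e.symm (u, v) i) =
      (∏ i : {i // ¬ I i}, p i (v i)) *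
        ∏ i : {i // I i}, p i (u i) * h (e.symm (u₀, v)) (u i) := by
    intro u v
    have hresample : h (e.symm (u, v)) = h (e.symm (u₀, v)) :=
      hloc _ _ fun i hi => (he_neg u v ⟨i, hi⟩).trans (he_neg u₀ v ⟨i, hi⟩).symm
    rw [hresample, ← Finset.prod_subtype_eq_prod_filter, Finset.subtype_univ,
      ← Fintype.prod_subtype_mul_prod_subtype I, Finset.prod_mul_distrib]
    simp only [he_pos, he_neg]
    ring
  have hinner : ∀ v, ∑ u, (∏ i, p i (e.symm (u, v) i)) *
      ∏ i with I i, h (e.symm (u, v)) (e.symm (u, v) i) ≤ ∏ i : {i // ¬ I i}, p i (v i) := by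
    intro v
    simp only [hfactor, ← Finset.mul_sum]
    rw [← Fintype.prod_sum fun (i : {i // I i}) t => p i t * h (e.symm (u₀, v)) t]
    exact mul_le_of_le_one_right (Finset.prod_nonneg fun i _ => (hp i).1 _) <|
      Finset.prod_le_one (fun i _ => Pexp_nonneg (hp i).1 (hh _)) fun i _ => hmean _ i.1 i.2
  rw [← Equiv.sum_comp e.symm, Fintype.sum_prod_type_right]
  exact (Finset.sum_le_sum fun v _ => hinner v).trans_eq
    (prod_mem_stdSimplex fun i : {i // ¬ I i} => hp i.1).2

end ProductWeights

section Counts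

variable {𝒮 𝒜 ℬ : Type} [DecidableEq 𝒮] [DecidableEq 𝒜] [DecidableEq ℬ] {N : ℕ}
  {D D' : Fin N → 𝒮 × 𝒜 × ℬ × 𝒮} {k : 𝒮 × 𝒜 × ℬ}

/-- The state-action triple at which a transition was sampled. -/
def triple (x : 𝒮 × 𝒜 × ℬ × 𝒮) : 𝒮 × 𝒜 × ℬ := (x.1, x.2.1, x.2.2.1)

lemma cnt_eq_card (D : Fin N → 𝒮 × 𝒜 × ℬ × 𝒮) (k : 𝒮 × 𝒜 × ℬ) :
    cnt D k.1 k.2.1 k.2.2 = (Finset.univ.filter fun i => triple (D i) = k).card := by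
  simp only [cnt, triple, Prod.ext_iff]

lemma cnt_le (D : Fin N → 𝒮 × 𝒜 × ℬ × 𝒮) (s : 𝒮) (a : 𝒜) (b : ℬ) : cnt D s a b ≤ N :=
  (Finset.card_filter_le _ _).trans_eq (Finset.card_fin N)

lemma sum_cnt_eq [Fintype 𝒮] [Fintype 𝒜] [Fintype ℬ] (D : Fin N → 𝒮 × 𝒜 × ℬ × 𝒮) :
    ∑ k : 𝒮 × 𝒜 × ℬ, cnt D k.1 k.2.1 k.2.2 = N := by
  simp only [cnt_eq_card]
  rw [← Finset.card_eq_sum_card_fiberwise fun _ _ => Finset.mem_coe.2 (Finset.mem_univ _),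
    Finset.card_fin]

lemma card_filter_cnt_ne_zero_le [Fintype 𝒮] [Fintype 𝒜] [Fintype ℬ]
    (D : Fin N → 𝒮 × 𝒜 × ℬ × 𝒮) :
    (Finset.univ.filter fun k : 𝒮 × 𝒜 × ℬ => cnt D k.1 k.2.1 k.2.2 ≠ 0).card ≤ N := by
  calc _ ≤ ∑ k : 𝒮 × 𝒜 × ℬ, cnt D k.1 k.2.1 k.2.2 := by
        rw [Finset.card_filter]
        exact Finset.sum_le_sum fun k _ => by split_ifs <;> omega
    _ = N := sum_cnt_eq D

lemma cnt_mul_Pexp_Phat [Fintype 𝒮] (hk : cnt D k.1 k.2.1 k.2.2 ≠ 0) (g : 𝒮 → ℝ) :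
    cnt D k.1 k.2.1 k.2.2 * Pexp (Phat D k.1 k.2.1 k.2.2) g =
      ∑ i with triple (D i) = k, g (D i).2.2.2 := by
  have hcell : ∀ t, (cnt D k.1 k.2.1 k.2.2 : ℝ) * (Phat D k.1 k.2.1 k.2.2 t * g t) =
      ∑ i with triple (D i) = k ∧ (D i).2.2.2 = t, g (D i).2.2.2 := by
    intro t
    have hcard : (cntT D k.1 k.2.1 k.2.2 t : ℝ) * g t =
        ∑ i with triple (D i) = k ∧ (D i).2.2.2 = t, g (D i).2.2.2 := by
      rw [Finset.sum_congr rfl fun i hi => by rw [(Finset.mem_filter.1 hi).2.2],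
        Finset.sum_const, nsmul_eq_mul]
      simp only [cntT, triple, Prod.ext_iff, and_assoc]
    rw [Phat, if_neg hk, ← hcard]
    field_simp
  simp only [Pexp, Finset.mul_sum, hcell, ← Finset.filter_filter]
  exact Finset.sum_fiberwise _ _ _

lemma Phat_mem_stdSimplex [Fintype 𝒮] [Nonempty 𝒮] (D : Fin N → 𝒮 × 𝒜 × ℬ × 𝒮)
    (s : 𝒮) (a : 𝒜) (b : ℬ) :
    Phat D s a b ∈ stdSimplex ℝ 𝒮 := by
  rcases eq_or_ne (cnt D s a b) 0 with h | h
  · have huniform : Phat D s a b = fun _ => (Fintype.card 𝒮 : ℝ)⁻¹ := funext fun _ => if_pos h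
    rw [huniform]
    exact ⟨fun _ => by positivity, by simp⟩
  · refine ⟨fun t => by rw [Phat, if_neg h]; positivity, ?_⟩
    have htotal := cnt_mul_Pexp_Phat (k := (s, a, b)) h fun _ => 1
    rw [Finset.sum_const, ← cnt_eq_card, nsmul_eq_mul] at htotal
    simpa only [Pexp, mul_one] using mul_left_cancel₀ (Nat.cast_ne_zero.2 h) htotal

/-- `AgreeOff k D D'` says that `D` and `D'` visit the same state-action triples and differ at most
in the next states drawn at `k`: a quantity is independent of those draws, given the visited
triples, when it takes the same value on all such pairs. -/
def AgreeOff (k : 𝒮 × 𝒜 × ℬ) (D D' : Fin N → 𝒮 × 𝒜 × ℬ × 𝒮) : Prop :=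
  (∀ i, triple (D i) = triple (D' i)) ∧ ∀ i, triple (D i) ≠ k → D i = D' i

lemma AgreeOff.cnt_eq (h : AgreeOff k D D') (s : 𝒮) (a : 𝒜) (b : ℬ) :
    cnt D s a b = cnt D' s a b := by
  simp only [cnt_eq_card D (s, a, b), cnt_eq_card D' (s, a, b), h.1]

lemma AgreeOff.Phat_eq [Fintype 𝒮] (h : AgreeOff k D D') {s : 𝒮} {a : 𝒜} {b : ℬ}
    (hk : (s, a, b) ≠ k) : Phat D s a b = Phat D' s a b := by
  have hcntT : ∀ t, cntT D s a b t = cntT D' s a b t := by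
    intro t
    refine congrArg Finset.card (Finset.filter_congr fun i _ => ?_)
    constructor <;> intro hi
    · rw [← h.2 i (by rw [hi]; exact hk), hi]
    · rw [h.2 i (by rw [h.1, hi]; exact hk), hi]
  funext t
  rw [Phat, Phat, h.cnt_eq, hcntT]

end Counts

section Dataset

variable {𝒮 𝒜 ℬ : Type} [Fintype 𝒮] [Fintype 𝒜] [Fintype ℬ] {N : ℕ}
  {d : 𝒮 → 𝒜 → ℬ → ℝ} {P : 𝒮 → 𝒜 → ℬ → 𝒮 → ℝ}

/-- A dataset, as the sequence of its state-action triples and the sequence of its next states. -/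
def dataEquiv : (Fin N → 𝒮 × 𝒜 × ℬ) × (Fin N → 𝒮) ≃ (Fin N → 𝒮 × 𝒜 × ℬ × 𝒮) where
  toFun q i := ((q.1 i).1, (q.1 i).2.1, (q.1 i).2.2, q.2 i)
  invFun D := (fun i => triple (D i), fun i => (D i).2.2.2)

lemma prod_dist_mem_stdSimplex (hd : IsDist3 d) :
    (fun x : Fin N → 𝒮 × 𝒜 × ℬ => ∏ i, d (x i).1 (x i).2.1 (x i).2.2) ∈ stdSimplex ℝ _ :=
  prod_mem_stdSimplex (p := fun _ (k : 𝒮 × 𝒜 × ℬ) => d k.1 k.2.1 k.2.2) fun _ =>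
    ⟨fun k => hd.1 k.1 k.2.1 k.2.2, by simpa only [Fintype.sum_prod_type] using hd.2⟩

lemma dsExp_eq_sum_sum (g : (Fin N → 𝒮 × 𝒜 × ℬ × 𝒮) → ℝ) :
    dsExp d P g = ∑ x : Fin N → 𝒮 × 𝒜 × ℬ, (∏ i, d (x i).1 (x i).2.1 (x i).2.2) *
      ∑ y : Fin N → 𝒮, (∏ i, P (x i).1 (x i).2.1 (x i).2.2 (y i)) * g (dataEquiv (x, y)) := by
  rw [dsExp, ← Equiv.sum_comp dataEquiv, Fintype.sum_prod_type]
  simp only [Finset.mul_sum, ← mul_assoc, ← Finset.prod_mul_distrib]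
  rfl

lemma dsWeight_mem_stdSimplex (hd : IsDist3 d) (hP : IsKernel P) :
    dsWeight d P ∈ stdSimplex ℝ (Fin N → 𝒮 × 𝒜 × ℬ × 𝒮) := by
  refine ⟨fun D => Finset.prod_nonneg fun i _ => mul_nonneg (hd.1 ..) ((hP ..).1 _), ?_⟩
  calc ∑ D, dsWeight d P D = dsExp (N := N) d P fun _ => 1 := by simp only [dsExp, mul_one]
    _ = 1 := by
      simp only [dsExp_eq_sum_sum, mul_one, (prod_mem_stdSimplex fun _ => hP ..).2,
        (prod_dist_mem_stdSimplex hd).2]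

lemma dsExp_mono (hd : IsDist3 d) (hP : IsKernel P) {g h : (Fin N → 𝒮 × 𝒜 × ℬ × 𝒮) → ℝ}
    (hgh : ∀ D, g D ≤ h D) : dsExp d P g ≤ dsExp d P h :=
  Pexp_mono (dsWeight_mem_stdSimplex hd hP).1 hgh

lemma dsExp_const_mul (c : ℝ) (g : (Fin N → 𝒮 × 𝒜 × ℬ × 𝒮) → ℝ) :
    dsExp d P (fun D => c * g D) = c * dsExp d P g :=
  Pexp_const_mul (dsWeight d P) c g

lemma dsExp_sum {ι : Type*} [Fintype ι] (g : ι → (Fin N → 𝒮 × 𝒜 × ℬ × 𝒮) → ℝ) :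
    dsExp d P (fun D => ∑ i, g i D) = ∑ i, dsExp d P (g i) := by
  simp only [dsExp, Finset.mul_sum]
  exact Finset.sum_comm

lemma dsProb_eq_dsExp (E : Set (Fin N → 𝒮 × 𝒜 × ℬ × 𝒮)) :
    dsProb d P E = dsExp d P (E.indicator 1) := by
  refine Finset.sum_congr rfl fun D _ => ?_
  simp only [Set.indicator_apply, Pi.one_apply, mul_ite, mul_one, mul_zero]

lemma dsProb_mono (hd : IsDist3 d) (hP : IsKernel P) {E F : Set (Fin N → 𝒮 × 𝒜 × ℬ × 𝒮)}
    (h : E ⊆ F) : dsProb d P E ≤ dsProb d P F := by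
  rw [dsProb_eq_dsExp, dsProb_eq_dsExp]
  exact dsExp_mono hd hP
    (Set.indicator_le_indicator_of_subset h fun _ => zero_le_one)

lemma one_sub_dsExp_le_dsProb (hd : IsDist3 d) (hP : IsKernel P)
    {E : Set (Fin N → 𝒮 × 𝒜 × ℬ × 𝒮)} {G : (Fin N → 𝒮 × 𝒜 × ℬ × 𝒮) → ℝ}
    (hG : ∀ D, 0 ≤ G D) (hE : ∀ D ∉ E, 1 ≤ G D) : 1 - dsExp d P G ≤ dsProb d P E := by
  have hle : dsExp d P (fun D => 1 - G D) ≤ dsProb d P E := by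
    rw [dsProb_eq_dsExp]
    refine dsExp_mono hd hP fun D => ?_
    by_cases hD : D ∈ E
    · simpa only [Set.indicator_of_mem hD, Pi.one_apply, sub_le_self_iff] using hG D
    · simpa only [Set.indicator_of_notMem hD, sub_nonpos] using hE D hD
  rwa [show dsExp d P (fun D => 1 - G D) = 1 - dsExp d P G from
    Pexp_const_sub (dsWeight_mem_stdSimplex hd hP) 1 G] at hle

lemma dsProb_add_dsProb_sub_one_le_inter (hd : IsDist3 d) (hP : IsKernel P)
    (E F : Set (Fin N → 𝒮 × 𝒜 × ℬ × 𝒮)) :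
    dsProb d P E + dsProb d P F - 1 ≤ dsProb d P (E ∩ F) := by
  have hw : dsWeight d P ∈ stdSimplex ℝ (Fin N → 𝒮 × 𝒜 × ℬ × 𝒮) := dsWeight_mem_stdSimplex hd hP
  have hle : dsExp d P (fun D => E.indicator 1 D + F.indicator 1 D - 1) ≤
      dsProb d P (E ∩ F) := by
    rw [dsProb_eq_dsExp]
    refine dsExp_mono hd hP fun D => ?_
    by_cases hE : D ∈ E <;> by_cases hF : D ∈ F <;> simp [hE, hF]
  rw [dsProb_eq_dsExp, dsProb_eq_dsExp]
  refine le_of_eq_of_le ?_ hle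
  exact ((Pexp_sub_const hw _ 1).trans (by rw [Pexp_add]; rfl)).symm

variable [DecidableEq 𝒮] [DecidableEq 𝒜] [DecidableEq ℬ]

lemma dsExp_exp_cnt_mul_Pexp_Phat_le [Nonempty 𝒮] (hd : IsDist3 d) (hP : IsKernel P) {k : 𝒮 × 𝒜 × ℬ}
    {h : (Fin N → 𝒮 × 𝒜 × ℬ × 𝒮) → 𝒮 → ℝ} (hloc : ∀ D D', AgreeOff k D D' → h D = h D')
    (hmgf : ∀ D, Pexp (P k.1 k.2.1 k.2.2) (fun t => Real.exp (h D t)) ≤ 1) :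
    dsExp d P (fun D => if cnt D k.1 k.2.1 k.2.2 ≠ 0 then
      Real.exp (cnt D k.1 k.2.1 k.2.2 * Pexp (Phat D k.1 k.2.1 k.2.2) (h D)) else 0) ≤
      dsExp d P (fun D : Fin N → 𝒮 × 𝒜 × ℬ × 𝒮 =>
        if cnt D k.1 k.2.1 k.2.2 ≠ 0 then 1 else 0) := by
  rw [dsExp_eq_sum_sum, dsExp_eq_sum_sum]
  refine Finset.sum_le_sum fun x _ => mul_le_mul_of_nonneg_left ?_
    ((prod_dist_mem_stdSimplex hd).1 x)
  have hcnt : ∀ y y', cnt (dataEquiv (x, y)) k.1 k.2.1 k.2.2 =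
      cnt (dataEquiv (x, y')) k.1 k.2.1 k.2.2 := fun _ _ => rfl
  by_cases hk : ∀ y, cnt (dataEquiv (x, y)) k.1 k.2.1 k.2.2 = 0
  · simp only [hk, ne_eq, not_true_eq_false, if_false, le_refl]
  obtain ⟨y₀, hy₀⟩ := not_forall.1 hk
  have hne : ∀ y, cnt (dataEquiv (x, y)) k.1 k.2.1 k.2.2 ≠ 0 := fun y => (hcnt y y₀).trans_ne hy₀
  simp only [if_pos (hne _), cnt_mul_Pexp_Phat (hne _), Real.exp_sum, mul_one,
    (prod_mem_stdSimplex fun _ => hP ..).2]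
  refine sum_prod_mul_prod_filter_le_one (I := fun i => x i = k)
    (h := fun y t => Real.exp (h (dataEquiv (x, y)) t)) (fun i => hP ..)
    (fun _ _ => (Real.exp_pos _).le) (fun y y' hy => ?_) ?_
  · have hagree : AgreeOff k (dataEquiv (x, y)) (dataEquiv (x, y')) :=
      ⟨fun _ => rfl, fun i hi => congrArg (fun t => ((x i).1, (x i).2.1, (x i).2.2, t)) (hy i hi)⟩
    rw [hloc _ _ hagree]
  · rintro y i rfl
    exact hmgf _

lemma one_sub_le_dsProb_forall_cnt_mul_Pexp_Phat_le [Nonempty 𝒮] (hd : IsDist3 d)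
    (hP : IsKernel P) {ι : Type*} [Fintype ι]
    {g : ι → 𝒮 × 𝒜 × ℬ → (Fin N → 𝒮 × 𝒜 × ℬ × 𝒮) → 𝒮 → ℝ}
    (hloc : ∀ i k D D', AgreeOff k D D' → g i k D = g i k D')
    (hmgf : ∀ i k D, Pexp (P k.1 k.2.1 k.2.2) (fun t => Real.exp (g i k D t)) ≤ 1) (L : ℝ) :
    1 - N * Fintype.card ι * Real.exp (-L) ≤
      dsProb d P {D : Fin N → 𝒮 × 𝒜 × ℬ × 𝒮 | ∀ k : 𝒮 × 𝒜 × ℬ, cnt D k.1 k.2.1 k.2.2 ≠ 0 →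
        ∀ i, cnt D k.1 k.2.1 k.2.2 * Pexp (Phat D k.1 k.2.1 k.2.2) (g i k D) ≤ L} := by
  let visited (k : 𝒮 × 𝒜 × ℬ) (D : Fin N → 𝒮 × 𝒜 × ℬ × 𝒮) : ℝ :=
    if cnt D k.1 k.2.1 k.2.2 ≠ 0 then 1 else 0
  let moment (q : ι × 𝒮 × 𝒜 × ℬ) (D : Fin N → 𝒮 × 𝒜 × ℬ × 𝒮) : ℝ :=
    if cnt D q.2.1 q.2.2.1 q.2.2.2 ≠ 0 then Real.exp (cnt D q.2.1 q.2.2.1 q.2.2.2 *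
      Pexp (Phat D q.2.1 q.2.2.1 q.2.2.2) (g q.1 q.2 D)) else 0
  have hmoment0 : ∀ q D, 0 ≤ moment q D := fun q D => by
    simp only [moment]; split_ifs <;> positivity
  have hvisited : ∀ D, ∑ k, visited k D ≤ N := fun D => by
    simp only [visited, Finset.sum_boole]
    exact_mod_cast card_filter_cnt_ne_zero_le D
  have hmarkov := one_sub_dsExp_le_dsProb hd hP (E := {D : Fin N → 𝒮 × 𝒜 × ℬ × 𝒮 |
      ∀ k : 𝒮 × 𝒜 × ℬ, cnt D k.1 k.2.1 k.2.2 ≠ 0 →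
        ∀ i, cnt D k.1 k.2.1 k.2.2 * Pexp (Phat D k.1 k.2.1 k.2.2) (g i k D) ≤ L})
    (G := fun D => Real.exp (-L) * ∑ q, moment q D)
    (fun D => mul_nonneg (Real.exp_pos _).le (Finset.sum_nonneg fun q _ => hmoment0 q D))
    fun D hD => by
      simp only [Set.mem_ofPred_eq, not_forall, not_le] at hD
      obtain ⟨k, hk, i, hi⟩ := hD
      calc (1 : ℝ) ≤ Real.exp (-L) * moment (i, k) D := by
            rw [show moment (i, k) D = _ from if_pos hk, ← Real.exp_add]
            exact Real.one_le_exp (by linarith)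
        _ ≤ _ := mul_le_mul_of_nonneg_left (Finset.single_le_sum (fun q _ => hmoment0 q D)
            (Finset.mem_univ _)) (Real.exp_pos _).le
  refine le_trans (sub_le_sub_left ?_ 1) hmarkov
  rw [dsExp_const_mul, dsExp_sum, mul_comm (N * _ : ℝ)]
  refine mul_le_mul_of_nonneg_left ?_ (Real.exp_pos _).le
  calc ∑ q, dsExp d P (moment q) ≤ ∑ q : ι × 𝒮 × 𝒜 × ℬ, dsExp d P (visited q.2) :=
        Finset.sum_le_sum fun q _ =>
          dsExp_exp_cnt_mul_Pexp_Phat_le hd hP (hloc q.1 q.2) (hmgf q.1 q.2)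
    _ = Fintype.card ι * dsExp d P (fun D => ∑ k, visited k D) := by
        simp only [Fintype.sum_prod_type, Finset.sum_const, Finset.card_univ, nsmul_eq_mul,
          dsExp_sum]
    _ ≤ Fintype.card ι * N := mul_le_mul_of_nonneg_left
        (Pexp_le (dsWeight_mem_stdSimplex hd hP) hvisited) (Nat.cast_nonneg _)
    _ = N * Fintype.card ι := mul_comm _ _

end Dataset

/-! ### Discounted monotone operators -/

section DiscountedMonotone

variable {𝒮 : Type*} {F : (𝒮 → ℝ) → 𝒮 → ℝ} {V W : 𝒮 → ℝ} {γ H : ℝ} {s : 𝒮}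

/-- An operator on the box `[0, H]^𝒮` which is monotone and contracts nonnegative uniform shifts by
the discount `γ`. -/
structure IsDiscountedMonotone (γ H : ℝ) (F : (𝒮 → ℝ) → 𝒮 → ℝ) : Prop where
  mem_Icc : ∀ ⦃V : 𝒮 → ℝ⦄, (∀ s, V s ∈ Set.Icc 0 H) → ∀ s, F V s ∈ Set.Icc 0 H
  le_add : ∀ ⦃V W : 𝒮 → ℝ⦄ ⦃c : ℝ⦄, 0 ≤ c → (∀ s, V s ∈ Set.Icc 0 H) →
    (∀ s, W s ∈ Set.Icc 0 H) → (∀ s, V s ≤ W s + c) → ∀ s, F V s ≤ F W s + γ * c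

namespace IsDiscountedMonotone

lemma iterate_mem_Icc (hF : IsDiscountedMonotone γ H F) (hV : ∀ s, V s ∈ Set.Icc 0 H) (t : ℕ)
    (s : 𝒮) : F^[t] V s ∈ Set.Icc 0 H := by
  induction t generalizing s with
  | zero => exact hV s
  | succ t ih =>
    rw [Function.iterate_succ_apply']
    exact hF.mem_Icc ih s

lemma iterate_le_iterate_succ (hF : IsDiscountedMonotone γ H F) (hV : ∀ s, V s ∈ Set.Icc 0 H)
    (hVF : ∀ s, V s ≤ F V s) (t : ℕ) (s : 𝒮) : F^[t] V s ≤ F^[t + 1] V s := by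
  induction t generalizing s with
  | zero => exact hVF s
  | succ t ih =>
    rw [Function.iterate_succ_apply', Function.iterate_succ_apply' F (t + 1)]
    simpa only [mul_zero, add_zero] using hF.le_add le_rfl (hF.iterate_mem_Icc hV t)
      (hF.iterate_mem_Icc hV (t + 1)) (fun s' => (ih s').trans_eq (add_zero _).symm) s

lemma iterate_succ_le_iterate_add (hF : IsDiscountedMonotone γ H F) (hγ : 0 ≤ γ)
    (hV : ∀ s, V s ∈ Set.Icc 0 H) (t : ℕ) (s : 𝒮) :
    F^[t + 1] V s ≤ F^[t] V s + γ ^ t * H := by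
  have hH : 0 ≤ H := (hV s).1.trans (hV s).2
  induction t generalizing s with
  | zero =>
    simp only [zero_add, Function.iterate_one, Function.iterate_zero, id, pow_zero, one_mul]
    linarith [(hF.mem_Icc hV s).2, (hV s).1]
  | succ t ih =>
    rw [Function.iterate_succ_apply' F (t + 1), Function.iterate_succ_apply' F t, pow_succ',
      mul_assoc]
    rw [Function.iterate_succ_apply'] at ih
    exact hF.le_add (by positivity) (hF.mem_Icc (hF.iterate_mem_Icc hV t))
      (hF.iterate_mem_Icc hV t) ih s

end IsDiscountedMonotone

/-- The operator `F` with its value at the state `s` frozen to `u`; its iterates ignore what `F`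
does at `s`. -/
def clamp (F : (𝒮 → ℝ) → 𝒮 → ℝ) (s : 𝒮) (u : ℝ) (V : 𝒮 → ℝ) : 𝒮 → ℝ :=
  Function.update (F V) s u

lemma clamp_congr {G : (𝒮 → ℝ) → 𝒮 → ℝ} (h : ∀ V, ∀ s' ≠ s, F V s' = G V s') (u : ℝ) :
    clamp F s u = clamp G s u := by
  funext V s'
  rcases eq_or_ne s' s with rfl | hs
  · simp only [clamp, Function.update_self]
  · simp only [clamp, Function.update_of_ne hs, h V s' hs]

lemma IsDiscountedMonotone.clamp_iterate_mem_Icc (hF : IsDiscountedMonotone γ H F)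
    (hu : u ∈ Set.Icc 0 H) (hV : ∀ s, V s ∈ Set.Icc 0 H) (t : ℕ) (s' : 𝒮) :
    (clamp F s u)^[t] V s' ∈ Set.Icc 0 H := by
  induction t generalizing s' with
  | zero => exact hV s'
  | succ t ih =>
    rw [Function.iterate_succ_apply', clamp, Function.update_apply]
    split_ifs
    · exact hu
    · exact hF.mem_Icc ih s'

lemma IsDiscountedMonotone.abs_clamp_iterate_sub_le (hF : IsDiscountedMonotone γ H F)
    (hγ : 0 ≤ γ) (hγ1 : γ ≤ 1) (hW : ∀ s, W s ∈ Set.Icc 0 H) (hWF : ∀ s, W s ≤ F W s)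
    (hFW : ∀ s, F W s ≤ W s + (1 - γ) * ε) (hu : u ∈ Set.Icc 0 H) (huW : |u - W s| ≤ ε)
    (hV : ∀ s, V s ∈ Set.Icc 0 H) (t : ℕ) (s' : 𝒮) :
    |(clamp F s u)^[t] V s' - W s'| ≤ ε + γ ^ t * H := by
  have hH : 0 ≤ H := hu.1.trans hu.2
  have hε : 0 ≤ ε := (abs_nonneg _).trans huW
  induction t generalizing s' with
  | zero =>
    rw [Function.iterate_zero, id, pow_zero, one_mul, abs_le]
    constructor <;> linarith [(hV s').1, (hV s').2, (hW s').1, (hW s').2]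
  | succ t ih =>
    have hγt : 0 ≤ γ ^ (t + 1) * H := by positivity
    rw [Function.iterate_succ_apply', clamp, Function.update_apply]
    split_ifs with hs
    · rw [hs]
      linarith
    · have he : 0 ≤ ε + γ ^ t * H := by positivity
      have hU := hF.clamp_iterate_mem_Icc (s := s) hu hV t
      have hupper := hF.le_add he hU hW (fun s => by linarith [(abs_le.1 (ih s)).2]) s'
      have hlower := hF.le_add he hW hU (fun s => by linarith [(abs_le.1 (ih s)).1]) s'
      have hγε : γ * ε ≤ ε := mul_le_of_le_one_left hε hγ1
      rw [mul_add, ← mul_assoc, ← pow_succ'] at hupper hlower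
      rw [abs_le]
      constructor <;> linarith [hWF s', hFW s']

end DiscountedMonotone

lemma exists_abs_grid_sub_le {H x : ℝ} (hx : x ∈ Set.Icc 0 H) {N : ℕ} (hN : N ≠ 0) :
    ∃ k : Fin (N + 1), |H * k / N - x| ≤ H / N := by
  rcases (hx.1.trans hx.2).eq_or_lt with rfl | hH
  · exact ⟨0, by simp [le_antisymm hx.2 hx.1]⟩
  have hN0 : (0 : ℝ) < N := Nat.cast_pos.2 (Nat.pos_of_ne_zero hN)
  have hfloor : ⌊x * N / H⌋₊ ≤ N :=
    Nat.floor_le_of_le ((div_le_iff₀ hH).2 (by rw [mul_comm]; gcongr; exact hx.2))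
  refine ⟨⟨⌊x * N / H⌋₊, Nat.lt_succ_of_le hfloor⟩, ?_⟩
  have hle := Nat.floor_le (div_nonneg (mul_nonneg hx.1 hN0.le) hH.le)
  have hlt := Nat.lt_floor_add_one (x * N / H)
  rw [le_div_iff₀ hH] at hle
  rw [div_lt_iff₀ hH] at hlt
  have hsub : H * (⌊x * N / H⌋₊ : ℝ) / N - x = (H * ⌊x * N / H⌋₊ - x * N) / N := by field_simp
  rw [hsub, abs_div, abs_of_pos hN0, div_le_div_iff_of_pos_right hN0, abs_le]
  constructor <;> linarith

lemma pow_Titer_le {γ : ℝ} {N : ℕ} (hN : N ≠ 0) (hγ : 0 < γ) (hγ1 : γ < 1) :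
    γ ^ Titer γ N ≤ (1 - γ) / N := by
  have : (0 : ℝ) < N := Nat.cast_pos.2 (Nat.pos_of_ne_zero hN)
  have : 0 < 1 - γ := sub_pos.2 hγ1
  have hceil : Real.log (N / (1 - γ)) ≤ Titer γ N * Real.log (1 / γ) :=
    (div_le_iff₀ (Real.log_pos ((one_lt_div hγ).2 hγ1))).1 (Nat.le_ceil _)
  rw [← Real.log_le_log_iff (by positivity) (by positivity), Real.log_pow, ← inv_div,
    Real.log_inv]
  rw [one_div, Real.log_inv] at hceil
  linarith

/-! ### Values of matrix games -/

section ValueMap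

variable {𝒜 ℬ : Type*} {val : (𝒜 → ℬ → ℝ) → ℝ} {M M' : 𝒜 → ℬ → ℝ} {c H : ℝ}

/-- A monotone, translation-equivariant and normalised evaluation of matrix games. The max-min value
and its counterpart for the other player are instances. -/
structure IsValueMap (val : (𝒜 → ℬ → ℝ) → ℝ) : Prop where
  mono : ∀ ⦃M M' : 𝒜 → ℬ → ℝ⦄, (∀ a b, M a b ≤ M' a b) → val M ≤ val M'
  add_const : ∀ (M : 𝒜 → ℬ → ℝ) (c : ℝ), val (fun a b => M a b + c) = val M + c
  zero : val (fun _ _ => 0) = 0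

/-- The evaluation of a game by the opponent, who receives the negated payoffs. -/
def dualVal (val : (𝒜 → ℬ → ℝ) → ℝ) (M : 𝒜 → ℬ → ℝ) : ℝ := -val fun a b => -M a b

namespace IsValueMap

lemma le_add (hval : IsValueMap val) (h : ∀ a b, M a b ≤ M' a b + c) : val M ≤ val M' + c :=
  (hval.mono h).trans_eq (hval.add_const M' c)

lemma const (hval : IsValueMap val) (c : ℝ) : val (fun _ _ => c) = c := by
  simpa only [zero_add, hval.zero] using hval.add_const (fun _ _ => 0) c

lemma mem_Icc (hval : IsValueMap val) (hM : ∀ a b, M a b ∈ Set.Icc 0 H) :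
    val M ∈ Set.Icc 0 H :=
  ⟨hval.zero.symm.trans_le (hval.mono fun a b => (hM a b).1),
    (hval.mono fun a b => (hM a b).2).trans_eq (hval.const H)⟩

lemma const_sub (hval : IsValueMap val) (c : ℝ) (M : 𝒜 → ℬ → ℝ) :
    val (fun a b => c - M a b) = c - dualVal val M := by
  simpa only [neg_add_eq_sub, dualVal, sub_neg_eq_add, add_comm c] using
    hval.add_const (fun a b => -M a b) c

protected lemma dualVal (hval : IsValueMap val) : IsValueMap (dualVal val) where
  mono _ _ h := neg_le_neg (hval.mono fun a b => neg_le_neg (h a b))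
  add_const M c := by
    have h := hval.add_const (fun a b => -M a b) (-c)
    simp only [← neg_add] at h
    rw [dualVal, h, neg_add, neg_neg, dualVal]
  zero := by rw [dualVal, neg_zero, hval.zero, neg_zero]

end IsValueMap

end ValueMap

section MatrixGame

variable {𝒜 ℬ : Type} [Fintype 𝒜] [Fintype ℬ] {M M' : 𝒜 → ℬ → ℝ} {w : 𝒜 → ℝ} {z : ℬ → ℝ}

/-- The max-min value of a matrix game, so that `valQ Q s` is `matVal (Q s)`. -/
def matVal (M : 𝒜 → ℬ → ℝ) : ℝ :=
  ⨆ w : stdSimplex ℝ 𝒜, ⨅ z : stdSimplex ℝ ℬ, pay M w.1 z.1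

lemma pay_mono (hw : w ∈ stdSimplex ℝ 𝒜) (hz : z ∈ stdSimplex ℝ ℬ) (h : ∀ a b, M a b ≤ M' a b) :
    pay M w z ≤ pay M' w z :=
  Finset.sum_le_sum fun a _ => Finset.sum_le_sum fun b _ =>
    mul_le_mul_of_nonneg_left (h a b) (mul_nonneg (hw.1 a) (hz.1 b))

lemma pay_const (hw : w ∈ stdSimplex ℝ 𝒜) (hz : z ∈ stdSimplex ℝ ℬ) (c : ℝ) :
    pay (fun _ _ => c) w z = c := by
  simp only [pay, ← Finset.sum_mul, ← Finset.mul_sum, hw.2, hz.2, one_mul]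

lemma pay_add (M M' : 𝒜 → ℬ → ℝ) (w : 𝒜 → ℝ) (z : ℬ → ℝ) :
    pay (fun a b => M a b + M' a b) w z = pay M w z + pay M' w z := by
  simp only [pay, mul_add, Finset.sum_add_distrib]

lemma pay_const_mul (c : ℝ) (M : 𝒜 → ℬ → ℝ) (w : 𝒜 → ℝ) (z : ℬ → ℝ) :
    pay (fun a b => c * M a b) w z = c * pay M w z := by
  simp only [pay, Finset.mul_sum, mul_left_comm c]

lemma exists_forall_abs_pay_le (M : 𝒜 → ℬ → ℝ) :
    ∃ C : ℝ, ∀ w ∈ stdSimplex ℝ 𝒜, ∀ z ∈ stdSimplex ℝ ℬ, |pay M w z| ≤ C := by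
  obtain ⟨C, hC⟩ := Finite.exists_le fun k : 𝒜 × ℬ => |M k.1 k.2|
  refine ⟨C, fun w hw z hz => abs_le.2 ⟨?_, ?_⟩⟩
  · rw [← pay_const hw hz (-C)]
    exact pay_mono hw hz fun a b => (abs_le.1 (hC (a, b))).1
  · rw [← pay_const hw hz C]
    exact pay_mono hw hz fun a b => (abs_le.1 (hC (a, b))).2

lemma bddBelow_pay (M : 𝒜 → ℬ → ℝ) (w : stdSimplex ℝ 𝒜) :
    BddBelow (Set.range fun z : stdSimplex ℝ ℬ => pay M w.1 z.1) := by
  obtain ⟨C, hC⟩ := exists_forall_abs_pay_le M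
  exact ⟨-C, Set.forall_mem_range.2 fun z => (abs_le.1 (hC w.1 w.2 z.1 z.2)).1⟩

variable [Nonempty ℬ]

lemma bddAbove_iInf_pay (M : 𝒜 → ℬ → ℝ) :
    BddAbove (Set.range fun w : stdSimplex ℝ 𝒜 => ⨅ z : stdSimplex ℝ ℬ, pay M w.1 z.1) := by
  obtain ⟨C, hC⟩ := exists_forall_abs_pay_le M
  obtain ⟨z⟩ := (inferInstance : Nonempty (stdSimplex ℝ ℬ))
  exact ⟨C, Set.forall_mem_range.2 fun w =>
    (ciInf_le (bddBelow_pay M w) z).trans (abs_le.1 (hC w.1 w.2 z.1 z.2)).2⟩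

lemma matVal_mono (h : ∀ a b, M a b ≤ M' a b) : matVal M ≤ matVal M' :=
  ciSup_mono (bddAbove_iInf_pay M') fun w =>
    ciInf_mono (bddBelow_pay M w) fun z => pay_mono w.2 z.2 h

lemma IsMatrixNash.matVal_eq (h : IsMatrixNash M w z) : matVal M = pay M w z := by
  obtain ⟨hw, hz, hmax, hmin⟩ := h
  have : Nonempty (stdSimplex ℝ 𝒜) := ⟨⟨w, hw⟩⟩
  apply le_antisymm
  · exact ciSup_le fun w' => (ciInf_le (bddBelow_pay M w') ⟨z, hz⟩).trans (hmax w'.1 w'.2)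
  · exact (le_ciInf fun z' : stdSimplex ℝ ℬ => hmin z'.1 z'.2).trans
      (le_ciSup (bddAbove_iInf_pay M) ⟨w, hw⟩)

variable [Nonempty 𝒜]

lemma matVal_add_const (M : 𝒜 → ℬ → ℝ) (c : ℝ) :
    matVal (fun a b => M a b + c) = matVal M + c := by
  have hpay : ∀ (w : stdSimplex ℝ 𝒜) (z : stdSimplex ℝ ℬ),
      pay (fun a b => M a b + c) w.1 z.1 = pay M w.1 z.1 + c := fun w z => by
    rw [pay_add M (fun _ _ => c), pay_const w.2 z.2]
  simp only [matVal, hpay, ← ciInf_add (bddBelow_pay M _), ← ciSup_add (bddAbove_iInf_pay M)]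

lemma isValueMap_matVal : IsValueMap (matVal : (𝒜 → ℬ → ℝ) → ℝ) where
  mono _ _ h := matVal_mono h
  add_const := matVal_add_const
  zero := by simp only [matVal, pay, mul_zero, Finset.sum_const_zero, ciInf_const, ciSup_const]

end MatrixGame

/-! ### Pessimistic value iteration -/

section Backup

variable {𝒮 : Type} [Fintype 𝒮] {p V W : 𝒮 → ℝ} {γ δ Cb c ρ : ℝ} {N n : ℕ}

/-- The penalised backup of the value `V` at a triple visited `n` times, with empirical reward `ρ`
and empirical transition row `p`. -/
def lcbBackup (γ δ Cb : ℝ) (N n : ℕ) (ρ : ℝ) (p V : 𝒮 → ℝ) : ℝ :=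
  max (ρ + γ * Pexp p V - penalty γ δ Cb N n p V) 0

lemma lcbBackup_mem_Icc (hγ : 0 ≤ γ) (hγ1 : γ < 1) (hp : p ∈ stdSimplex ℝ 𝒮) (hρ : ρ ≤ 1)
    (hV : ∀ s, V s ≤ 1 / (1 - γ)) : lcbBackup γ δ Cb N n ρ p V ∈ Set.Icc 0 (1 / (1 - γ)) := by
  refine ⟨le_max_right _ _, max_le ?_ (one_div_nonneg.2 (sub_nonneg.2 hγ1.le))⟩
  calc ρ + γ * Pexp p V - penalty γ δ Cb N n p V ≤ 1 + γ * (1 / (1 - γ)) - 0 := by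
        gcongr
        exacts [Pexp_le hp hV, penalty_nonneg hγ1.le]
    _ = 1 / (1 - γ) := by rw [sub_zero, one_add_mul_one_div_one_sub hγ1]

lemma lcbBackup_le_add (hγ : 1 / 2 ≤ γ) (hγ1 : γ < 1) (hp : p ∈ stdSimplex ℝ 𝒮)
    (hC : n ≠ 0 → 0 < Cb * Real.log (N / ((1 - γ) * δ))) (hc : 0 ≤ c)
    (hW : ∀ s, W s ∈ Set.Icc 0 (1 / (1 - γ))) (hVW : ∀ s, V s ≤ W s + c) :
    lcbBackup γ δ Cb N n ρ p V ≤ lcbBackup γ δ Cb N n ρ p W + γ * c := by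
  have hpen := penalty_sub_penalty_le hγ1 hp hC hVW fun s t => by
    linarith [(hW s).2, (hW t).1]
  rw [penalty_congr (varP_add_const hp W c), Pexp_add_const hp] at hpen
  have hexp : (Pexp p W + c - Pexp p V) / 2 ≤ γ * (Pexp p W + c - Pexp p V) := by
    have hle := Pexp_mono hp.1 hVW
    rw [Pexp_add_const hp] at hle
    rw [div_eq_inv_mul, ← one_div]
    exact mul_le_mul_of_nonneg_right hγ (sub_nonneg.2 hle)
  have hγc : 0 ≤ γ * c := mul_nonneg (by linarith) hc
  rw [lcbBackup, lcbBackup, ← max_add_add_right, zero_add]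
  exact max_le_max (by linarith) hγc

end Backup

section Iteration

variable {𝒮 𝒜 ℬ : Type} [DecidableEq 𝒮] [DecidableEq 𝒜] [DecidableEq ℬ] {N : ℕ}
  {D D' : Fin N → 𝒮 × 𝒜 × ℬ × 𝒮} {val : (𝒜 → ℬ → ℝ) → ℝ} {γ δ Cb c u : ℝ}
  {r : 𝒮 → 𝒜 → ℬ → ℝ} {k : 𝒮 × 𝒜 × ℬ}

/-- The empirical reward with value `c` at unvisited triples; the reward `rhat` of the algorithm is
the case `c = 0`, and its reflection `1 - rhat` is the case `c = 1`. -/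
def rewardOr (c : ℝ) (r : 𝒮 → 𝒜 → ℬ → ℝ) (D : Fin N → 𝒮 × 𝒜 × ℬ × 𝒮) (s : 𝒮) (a : 𝒜) (b : ℬ) :
    ℝ :=
  if cnt D s a b = 0 then c else r s a b

lemma rewardOr_mem_Icc (hc : c ∈ Set.Icc 0 1) (hr : IsReward r) (D : Fin N → 𝒮 × 𝒜 × ℬ × 𝒮)
    (s : 𝒮) (a : 𝒜) (b : ℬ) : rewardOr c r D s a b ∈ Set.Icc 0 1 := by
  unfold rewardOr
  split_ifs
  exacts [hc, hr s a b]

variable [Fintype 𝒮]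

/-- The action values obtained from the value estimate `V` by a pessimistic backup. -/
def lcbQ (γ δ Cb c : ℝ) (r : 𝒮 → 𝒜 → ℬ → ℝ) (D : Fin N → 𝒮 × 𝒜 × ℬ × 𝒮) (V : 𝒮 → ℝ) (s : 𝒮)
    (a : 𝒜) (b : ℬ) : ℝ :=
  lcbBackup γ δ Cb N (cnt D s a b) (rewardOr c r D s a b) (Phat D s a b) V

/-- One step of pessimistic value iteration, with matrix games evaluated by `val`. -/
def lcbStep (val : (𝒜 → ℬ → ℝ) → ℝ) (γ δ Cb c : ℝ) (r : 𝒮 → 𝒜 → ℬ → ℝ)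
    (D : Fin N → 𝒮 × 𝒜 × ℬ × 𝒮) (V : 𝒮 → ℝ) (s : 𝒮) : ℝ :=
  val (lcbQ γ δ Cb c r D V s)

/-- The final value estimate of pessimistic value iteration. -/
def lcbValue (val : (𝒜 → ℬ → ℝ) → ℝ) (γ δ Cb c : ℝ) (r : 𝒮 → 𝒜 → ℬ → ℝ)
    (D : Fin N → 𝒮 × 𝒜 × ℬ × 𝒮) : 𝒮 → ℝ :=
  (lcbStep val γ δ Cb c r D)^[Titer γ N] fun _ => 0

/-- The leave-one-state-out value estimate: value iteration with the value at `s` frozen to `u`. It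
does not depend on the observed successors of `s`. -/
def looValue (val : (𝒜 → ℬ → ℝ) → ℝ) (γ δ Cb c : ℝ) (r : 𝒮 → 𝒜 → ℬ → ℝ)
    (D : Fin N → 𝒮 × 𝒜 × ℬ × 𝒮) (s : 𝒮) (u : ℝ) : 𝒮 → ℝ :=
  (clamp (lcbStep val γ δ Cb c r D) s u)^[Titer γ N] fun _ => 0

lemma AgreeOff.looValue_eq (h : AgreeOff k D D') (val : (𝒜 → ℬ → ℝ) → ℝ) (γ δ Cb c : ℝ)
    (r : 𝒮 → 𝒜 → ℬ → ℝ) (u : ℝ) :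
    looValue val γ δ Cb c r D k.1 u = looValue val γ δ Cb c r D' k.1 u := by
  have hstep : ∀ V, ∀ s ≠ k.1, lcbStep val γ δ Cb c r D V s = lcbStep val γ δ Cb c r D' V s :=
    fun V s hs => congrArg val <| funext fun a => funext fun b => by
      rw [lcbQ, lcbQ, rewardOr, rewardOr, h.cnt_eq, h.Phat_eq fun hk => hs (congrArg Prod.fst hk)]
  rw [looValue, looValue, clamp_congr hstep]

lemma half_le_log_ratio (hγ : 1 / 2 ≤ γ) (hγ1 : γ < 1) (hδ : δ ∈ Set.Ioo 0 1) (hN : N ≠ 0) :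
    1 / 2 ≤ Real.log (N / ((1 - γ) * δ)) := by
  have hN1 : (1 : ℝ) ≤ N := Nat.one_le_cast.2 (Nat.one_le_iff_ne_zero.2 hN)
  have htwo : (2 : ℝ) ≤ N / ((1 - γ) * δ) := by
    rw [le_div_iff₀ (mul_pos (sub_pos.2 hγ1) hδ.1)]
    nlinarith [hδ.1, hδ.2]
  linarith [Real.log_le_log two_pos htwo, Real.log_two_gt_d9]

lemma exp_neg_log_ratio_le (hγ : 1 / 2 ≤ γ) (hγ1 : γ < 1) (hδ : δ ∈ Set.Ioo 0 1) (N : ℕ) :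
    N * ((N + 1) * N) * Real.exp (-(3 * Real.log (N / ((1 - γ) * δ)))) ≤ δ / 2 := by
  obtain ⟨hδ0, hδ1⟩ := hδ
  rcases eq_or_ne N 0 with rfl | hN
  · rw [Nat.cast_zero, zero_mul, zero_mul]
    exact (half_pos hδ0).le
  have hN1 : (1 : ℝ) ≤ N := Nat.one_le_cast.2 (Nat.one_le_iff_ne_zero.2 hN)
  have : 0 < 1 - γ := sub_pos.2 hγ1
  have hexp : Real.exp (-(3 * Real.log (N / ((1 - γ) * δ)))) = ((1 - γ) * δ / N) ^ 3 := by
    rw [← mul_neg, ← Real.log_inv, inv_div, ← Nat.cast_ofNat (n := 3), Real.exp_nat_mul,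
      Real.exp_log (by positivity)]
  have hratio : (1 - γ) * δ / N ≤ δ / (2 * N) := by
    rw [div_le_div_iff₀ (by positivity) (by positivity)]
    nlinarith [mul_pos hδ0 (zero_lt_one.trans_le hN1)]
  calc N * ((N + 1) * N) * Real.exp (-(3 * Real.log (N / ((1 - γ) * δ))))
      ≤ N * ((N + N) * N) * (δ / (2 * N)) ^ 3 := by rw [hexp]; gcongr
    _ = δ * δ ^ 2 / 4 := by field_simp; norm_num
    _ ≤ δ * 1 / 4 := by gcongr; exact pow_le_one₀ hδ0.le hδ1.le
    _ ≤ δ / 2 := by linarith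

variable [Nonempty 𝒮]

lemma lcbQ_le_add (hγ : 1 / 2 ≤ γ) (hγ1 : γ < 1) (hδ : δ ∈ Set.Ioo 0 1) (hCb : 0 < Cb) {e : ℝ}
    (he : 0 ≤ e) {V W : 𝒮 → ℝ} (hW : ∀ s, W s ∈ Set.Icc 0 (1 / (1 - γ)))
    (hVW : ∀ s, V s ≤ W s + e) (D : Fin N → 𝒮 × 𝒜 × ℬ × 𝒮) (s : 𝒮) (a : 𝒜) (b : ℬ) :
    lcbQ γ δ Cb c r D V s a b ≤ lcbQ γ δ Cb c r D W s a b + γ * e :=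
  lcbBackup_le_add hγ hγ1 (Phat_mem_stdSimplex D s a b)
    (fun hn => mul_pos hCb <| one_half_pos.trans_le <| half_le_log_ratio hγ hγ1 hδ fun hN =>
      hn (Nat.le_zero.1 (hN ▸ cnt_le D s a b))) he hW hVW

lemma isDiscountedMonotone_lcbStep (hval : IsValueMap val) (hγ : 1 / 2 ≤ γ) (hγ1 : γ < 1)
    (hδ : δ ∈ Set.Ioo 0 1) (hCb : 0 < Cb) (hc : c ∈ Set.Icc 0 1) (hr : IsReward r)
    (D : Fin N → 𝒮 × 𝒜 × ℬ × 𝒮) :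
    IsDiscountedMonotone γ (1 / (1 - γ)) (lcbStep val γ δ Cb c r D) where
  mem_Icc V hV s := hval.mem_Icc fun a b =>
    lcbBackup_mem_Icc (by linarith) hγ1 (Phat_mem_stdSimplex D s a b)
      (rewardOr_mem_Icc hc hr D s a b).2 fun t => (hV t).2
  le_add V W e he _ hW hVW s := hval.le_add (lcbQ_le_add hγ hγ1 hδ hCb he hW hVW D s)

lemma lcbValue_mem_Icc (hval : IsValueMap val) (hγ : 1 / 2 ≤ γ) (hγ1 : γ < 1)
    (hδ : δ ∈ Set.Ioo 0 1) (hCb : 0 < Cb) (hc : c ∈ Set.Icc 0 1) (hr : IsReward r)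
    (D : Fin N → 𝒮 × 𝒜 × ℬ × 𝒮) (s : 𝒮) : lcbValue val γ δ Cb c r D s ∈ Set.Icc 0 (1 / (1 - γ)) :=
  (isDiscountedMonotone_lcbStep hval hγ hγ1 hδ hCb hc hr D).iterate_mem_Icc
    (fun _ => Set.left_mem_Icc.2 (one_div_nonneg.2 (sub_nonneg.2 hγ1.le))) _ s

lemma looValue_mem_Icc (hval : IsValueMap val) (hγ : 1 / 2 ≤ γ) (hγ1 : γ < 1)
    (hδ : δ ∈ Set.Ioo 0 1) (hCb : 0 < Cb) (hc : c ∈ Set.Icc 0 1) (hr : IsReward r)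
    (hu : u ∈ Set.Icc 0 (1 / (1 - γ))) (D : Fin N → 𝒮 × 𝒜 × ℬ × 𝒮) (s s' : 𝒮) :
    looValue val γ δ Cb c r D s u s' ∈ Set.Icc 0 (1 / (1 - γ)) :=
  (isDiscountedMonotone_lcbStep hval hγ hγ1 hδ hCb hc hr D).clamp_iterate_mem_Icc hu
    (fun _ => Set.left_mem_Icc.2 (hu.1.trans hu.2)) _ s'

lemma abs_looValue_sub_lcbValue_le (hval : IsValueMap val) (hγ : 1 / 2 ≤ γ) (hγ1 : γ < 1)
    (hδ : δ ∈ Set.Ioo 0 1) (hCb : 0 < Cb) (hc : c ∈ Set.Icc 0 1) (hr : IsReward r) (hN : N ≠ 0)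
    (hu : u ∈ Set.Icc 0 (1 / (1 - γ))) (D : Fin N → 𝒮 × 𝒜 × ℬ × 𝒮) {s : 𝒮}
    (huV : |u - lcbValue val γ δ Cb c r D s| ≤ 1 / (1 - γ) / N) (s' : 𝒮) :
    |looValue val γ δ Cb c r D s u s' - lcbValue val γ δ Cb c r D s'| ≤ 2 * (1 / (1 - γ)) / N := by
  have hF := isDiscountedMonotone_lcbStep hval hγ hγ1 hδ hCb hc hr D
  have hγ0 : 0 ≤ γ := by linarith
  have hsub : 0 < 1 - γ := sub_pos.2 hγ1
  have h0 : ∀ _ : 𝒮, (0 : ℝ) ∈ Set.Icc 0 (1 / (1 - γ)) := fun _ =>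
    Set.left_mem_Icc.2 (hu.1.trans hu.2)
  have hpow : γ ^ Titer γ N * (1 / (1 - γ)) ≤ (1 - γ) * (1 / (1 - γ) / N) :=
    (mul_le_mul_of_nonneg_right (pow_Titer_le hN (by linarith) hγ1)
      (one_div_nonneg.2 hsub.le)).trans_eq (by ring)
  have hmono := hF.iterate_le_iterate_succ h0 (fun s => (hF.mem_Icc h0 s).1) (Titer γ N)
  have hsucc := hF.iterate_succ_le_iterate_add hγ0 h0 (Titer γ N)
  simp only [Function.iterate_succ_apply'] at hmono hsucc
  calc |looValue val γ δ Cb c r D s u s' - lcbValue val γ δ Cb c r D s'|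
      ≤ 1 / (1 - γ) / N + γ ^ Titer γ N * (1 / (1 - γ)) :=
        hF.abs_clamp_iterate_sub_le hγ0 hγ1.le (hF.iterate_mem_Icc h0 _) hmono
          (fun s => (hsucc s).trans (by gcongr)) hu huV h0 _ s'
    _ ≤ 1 / (1 - γ) / N + 1 * (1 / (1 - γ) / N) := by
        refine add_le_add_right (hpow.trans ?_) _
        gcongr
        linarith
    _ = 2 * (1 / (1 - γ)) / N := by ring

end Iteration

section Concentration

variable {𝒮 𝒜 ℬ : Type} [Fintype 𝒮] [Nonempty 𝒮] [DecidableEq 𝒮] [DecidableEq 𝒜] [DecidableEq ℬ]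
  {N : ℕ} {D : Fin N → 𝒮 × 𝒜 × ℬ × 𝒮} {val : (𝒜 → ℬ → ℝ) → ℝ} {γ δ Cb c : ℝ}
  {r db : 𝒮 → 𝒜 → ℬ → ℝ} {P : 𝒮 → 𝒜 → ℬ → 𝒮 → ℝ} {s : 𝒮} {a : 𝒜} {b : ℬ}

/-- The self-normalised increments of the leave-one-state-out values under the true kernel. The
index `i` ranges over the grid points `i.1` for the frozen value and the scales `i.2 + 1`. -/
def looIncrement (val : (𝒜 → ℬ → ℝ) → ℝ) (γ δ Cb c : ℝ) (r : 𝒮 → 𝒜 → ℬ → ℝ)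
    (P : 𝒮 → 𝒜 → ℬ → 𝒮 → ℝ) (i : Fin (N + 1) × Fin N) (k : 𝒮 × 𝒜 × ℬ)
    (D : Fin N → 𝒮 × 𝒜 × ℬ × 𝒮) : 𝒮 → ℝ :=
  selfNorm (1 / (2 * (1 / (1 - γ)) * (i.2 + 1 : ℕ))) (P k.1 k.2.1 k.2.2)
    (looValue val γ δ Cb c r D k.1 (1 / (1 - γ) * i.1 / N))

/-- The event that, at every visited triple, the cumulated increments `looIncrement` stay below
`3 log(N / ((1 - γ) δ))`. -/
def looConcentration (N : ℕ) (val : (𝒜 → ℬ → ℝ) → ℝ) (γ δ Cb c : ℝ) (r : 𝒮 → 𝒜 → ℬ → ℝ)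
    (P : 𝒮 → 𝒜 → ℬ → 𝒮 → ℝ) : Set (Fin N → 𝒮 × 𝒜 × ℬ × 𝒮) :=
  {D | ∀ k : 𝒮 × 𝒜 × ℬ, cnt D k.1 k.2.1 k.2.2 ≠ 0 → ∀ i,
    cnt D k.1 k.2.1 k.2.2 * Pexp (Phat D k.1 k.2.1 k.2.2) (looIncrement val γ δ Cb c r P i k D) ≤
      3 * Real.log (N / ((1 - γ) * δ))}

lemma grid_mem_Icc {H : ℝ} (hH : 0 ≤ H) (i : Fin (N + 1)) : H * i / N ∈ Set.Icc 0 H := by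
  refine ⟨by positivity, div_le_of_le_mul₀ (Nat.cast_nonneg N) hH ?_⟩
  gcongr
  exact Nat.lt_succ_iff.1 i.2

lemma one_sub_le_dsProb_looConcentration [Fintype 𝒜] [Fintype ℬ] (hval : IsValueMap val)
    (hγ : 1 / 2 ≤ γ) (hγ1 : γ < 1) (hδ : δ ∈ Set.Ioo 0 1) (hCb : 0 < Cb) (hc : c ∈ Set.Icc 0 1)
    (hr : IsReward r) (hP : IsKernel P) (hdb : IsDist3 db) :
    1 - δ / 2 ≤ dsProb db P (looConcentration N val γ δ Cb c r P) := by
  have hH : 0 < 1 / (1 - γ) := one_div_pos.2 (sub_pos.2 hγ1)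
  have hmgf : ∀ (i : Fin (N + 1) × Fin N) k D,
      Pexp (P k.1 k.2.1 k.2.2) (fun t => Real.exp (looIncrement val γ δ Cb c r P i k D t)) ≤ 1 := by
    intro i k D
    refine Pexp_exp_selfNorm_le_one (hP _ _ _)
      (looValue_mem_Icc hval hγ hγ1 hδ hCb hc hr (grid_mem_Icc hH.le i.1) D k.1) (by positivity) ?_
    have hscale : (1 : ℝ) ≤ (i.2 + 1 : ℕ) := Nat.one_le_cast.2 (Nat.le_add_left 1 _)
    rw [one_div_mul_eq_div, div_le_div_iff₀ (by positivity) two_pos, one_mul, mul_comm]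
    exact le_mul_of_one_le_right (by positivity) hscale
  have hconc := one_sub_le_dsProb_forall_cnt_mul_Pexp_Phat_le hdb hP
    (fun i k D D' h => by rw [looIncrement, looIncrement, h.looValue_eq]) hmgf
    (3 * Real.log (N / ((1 - γ) * δ)))
  simp only [Fintype.card_prod, Fintype.card_fin, Nat.cast_mul, Nat.cast_add, Nat.cast_one]
    at hconc
  exact (sub_le_sub_left (exp_neg_log_ratio_le hγ hγ1 hδ N) 1).trans hconc

lemma lcbQ_eq_zero_of_cnt_eq_zero (hγ : 0 ≤ γ) (hγ1 : γ < 1) (hc : c ≤ 1) {V : 𝒮 → ℝ}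
    (hV : ∀ s, V s ≤ 1 / (1 - γ)) (hn : cnt D s a b = 0) : lcbQ γ δ Cb c r D V s a b = 0 := by
  have hexp := mul_le_mul_of_nonneg_left (Pexp_le (Phat_mem_stdSimplex D s a b) hV) hγ
  have hpen := one_div_one_sub_le_penalty_zero (γ := γ) (δ := δ) (Cb := Cb) (N := N)
    (p := Phat D s a b) (V := V)
  rw [lcbQ, lcbBackup, rewardOr, if_pos hn, hn]
  exact max_eq_right (by linarith [one_add_mul_one_div_one_sub hγ1])

lemma mul_Pexp_Phat_sub_le_penalty (hval : IsValueMap val) (hγ : 1 / 2 ≤ γ) (hγ1 : γ < 1)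
    (hδ : δ ∈ Set.Ioo 0 1) (hCb : 256 ≤ Cb) (hc : c ∈ Set.Icc 0 1) (hr : IsReward r)
    (hP : IsKernel P) (hD : D ∈ looConcentration N val γ δ Cb c r P) (hn : cnt D s a b ≠ 0) :
    γ * (Pexp (Phat D s a b) (lcbValue val γ δ Cb c r D) -
      Pexp (P s a b) (lcbValue val γ δ Cb c r D)) ≤
    penalty γ δ Cb N (cnt D s a b) (Phat D s a b) (lcbValue val γ δ Cb c r D) := by
  have hCb0 : 0 < Cb := by linarith
  have hH : 0 < 1 / (1 - γ) := one_div_pos.2 (sub_pos.2 hγ1)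
  have hcntN : cnt D s a b ≤ N := cnt_le D s a b
  have hN : N ≠ 0 := fun h => hn (Nat.le_zero.1 (h ▸ hcntN))
  have hV := lcbValue_mem_Icc hval hγ hγ1 hδ hCb0 hc hr D
  obtain ⟨i, hi⟩ := exists_abs_grid_sub_le (hV s) hN
  have hu := grid_mem_Icc hH.le i
  refine mul_Pexp_sub_le_penalty (Phat_mem_stdSimplex D s a b) (hP s a b) (by linarith) hγ1 hCb hn
    (half_le_log_ratio hγ hγ1 hδ hN) hV (looValue_mem_Icc hval hγ hγ1 hδ hCb0 hc hr hu D s)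
    (fun t => (abs_looValue_sub_lcbValue_le hval hγ hγ1 hδ hCb0 hc hr hN hu D hi t).trans ?_)
    fun j hj hjn => ?_
  · gcongr
  · have hdev := hD (s, a, b) hn (i, ⟨j - 1, by omega⟩)
    simpa only [looIncrement, Nat.sub_add_cancel hj] using hdev

lemma lcbQ_lcbValue_le (hval : IsValueMap val) (hγ : 1 / 2 ≤ γ) (hγ1 : γ < 1)
    (hδ : δ ∈ Set.Ioo 0 1) (hCb : 256 ≤ Cb) (hc : c ∈ Set.Icc 0 1) (hr : IsReward r)
    (hP : IsKernel P) (hD : D ∈ looConcentration N val γ δ Cb c r P) (s : 𝒮) (a : 𝒜) (b : ℬ) :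
    lcbQ γ δ Cb c r D (lcbValue val γ δ Cb c r D) s a b ≤
      r s a b + γ * Pexp (P s a b) (lcbValue val γ δ Cb c r D) := by
  have hV := lcbValue_mem_Icc hval hγ hγ1 hδ (by linarith) hc hr D
  have hγ0 : 0 ≤ γ := by linarith
  have hnonneg : 0 ≤ r s a b + γ * Pexp (P s a b) (lcbValue val γ δ Cb c r D) :=
    add_nonneg (hr s a b).1 (mul_nonneg hγ0 (Pexp_nonneg (hP s a b).1 fun t => (hV t).1))
  by_cases hn : cnt D s a b = 0
  · exact (lcbQ_eq_zero_of_cnt_eq_zero hγ0 hγ1 hc.2 (fun t => (hV t).2) hn).trans_le hnonneg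
  · have hpen := mul_Pexp_Phat_sub_le_penalty hval hγ hγ1 hδ hCb hc hr hP hD hn
    rw [lcbQ, lcbBackup, rewardOr, if_neg hn]
    exact max_le (by linarith) hnonneg

end Concentration

/-! ### The action-value estimates -/

section ActionValue

variable {𝒮 𝒜 ℬ : Type} [Fintype 𝒮] [DecidableEq 𝒮] [DecidableEq 𝒜] [DecidableEq ℬ] {N : ℕ}
  {val : (𝒜 → ℬ → ℝ) → ℝ} {γ δ Cb c : ℝ} {r db : 𝒮 → 𝒜 → ℬ → ℝ} {P : 𝒮 → 𝒜 → ℬ → 𝒮 → ℝ}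

/-- The final action-value estimate of pessimistic value iteration. -/
def lcbQValue (val : (𝒜 → ℬ → ℝ) → ℝ) (γ δ Cb c : ℝ) (r : 𝒮 → 𝒜 → ℬ → ℝ)
    (D : Fin N → 𝒮 × 𝒜 × ℬ × 𝒮) : 𝒮 → 𝒜 → ℬ → ℝ :=
  (fun Q => lcbQ γ δ Cb c r D fun s => val (Q s))^[Titer γ N] fun _ _ _ => 0

lemma val_lcbQ_iterate (hval : IsValueMap val) (γ δ Cb c : ℝ) (r : 𝒮 → 𝒜 → ℬ → ℝ)
    (D : Fin N → 𝒮 × 𝒜 × ℬ × 𝒮) (t : ℕ) :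
    (fun s => val (((fun Q => lcbQ γ δ Cb c r D fun s => val (Q s))^[t] fun _ _ _ => 0) s)) =
      (lcbStep val γ δ Cb c r D)^[t] fun _ => 0 := by
  have hsemi : Function.Semiconj (fun (Q : 𝒮 → 𝒜 → ℬ → ℝ) s => val (Q s))
      (fun Q => lcbQ γ δ Cb c r D fun s => val (Q s)) (lcbStep val γ δ Cb c r D) := fun _ => rfl
  simpa only [hval.zero] using (hsemi.iterate_right t).eq fun _ _ _ => 0

lemma val_lcbQValue (hval : IsValueMap val) (γ δ Cb c : ℝ) (r : 𝒮 → 𝒜 → ℬ → ℝ)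
    (D : Fin N → 𝒮 × 𝒜 × ℬ × 𝒮) :
    (fun s => val (lcbQValue val γ δ Cb c r D s)) = lcbValue val γ δ Cb c r D :=
  val_lcbQ_iterate hval γ δ Cb c r D (Titer γ N)

variable [Nonempty 𝒮]

lemma lcbQValue_le_lcbQ (hval : IsValueMap val) (hγ : 1 / 2 ≤ γ) (hγ1 : γ < 1)
    (hδ : δ ∈ Set.Ioo 0 1) (hCb : 0 < Cb) (hc : c ∈ Set.Icc 0 1) (hr : IsReward r)
    (D : Fin N → 𝒮 × 𝒜 × ℬ × 𝒮) (s : 𝒮) (a : 𝒜) (b : ℬ) :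
    lcbQValue val γ δ Cb c r D s a b ≤ lcbQ γ δ Cb c r D (lcbValue val γ δ Cb c r D) s a b := by
  rw [lcbQValue, lcbValue]
  cases Titer γ N with
  | zero => exact le_max_right _ _
  | succ t =>
    rw [Function.iterate_succ_apply', val_lcbQ_iterate hval]
    have hF := isDiscountedMonotone_lcbStep hval hγ hγ1 hδ hCb hc hr D
    have h0 : ∀ _ : 𝒮, (0 : ℝ) ∈ Set.Icc 0 (1 / (1 - γ)) := fun _ =>
      Set.left_mem_Icc.2 (one_div_nonneg.2 (sub_nonneg.2 hγ1.le))
    have hle := lcbQ_le_add (c := c) (r := r) hγ hγ1 hδ hCb le_rfl (hF.iterate_mem_Icc h0 (t + 1))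
      (fun s => (hF.iterate_le_iterate_succ h0 (fun s => (hF.mem_Icc h0 s).1) t s).trans_eq
        (add_zero _).symm) D s a b
    rwa [mul_zero, add_zero] at hle

lemma lcbQValue_le (hval : IsValueMap val) (hγ : 1 / 2 ≤ γ) (hγ1 : γ < 1)
    (hδ : δ ∈ Set.Ioo 0 1) (hCb : 256 ≤ Cb) (hc : c ∈ Set.Icc 0 1) (hr : IsReward r)
    (hP : IsKernel P) {D : Fin N → 𝒮 × 𝒜 × ℬ × 𝒮} (hD : D ∈ looConcentration N val γ δ Cb c r P)
    (s : 𝒮) (a : 𝒜) (b : ℬ) :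
    lcbQValue val γ δ Cb c r D s a b ≤
      r s a b + γ * Pexp (P s a b) fun s' => val (lcbQValue val γ δ Cb c r D s') := by
  rw [val_lcbQValue hval]
  exact (lcbQValue_le_lcbQ hval hγ hγ1 hδ (by linarith) hc hr D s a b).trans
    (lcbQ_lcbValue_le hval hγ hγ1 hδ hCb hc hr hP hD s a b)

variable [Fintype 𝒜] [Fintype ℬ] [Nonempty 𝒜] [Nonempty ℬ]

lemma TpePlus_const_sub (hγ1 : γ < 1) (δ Cb : ℝ) (r : 𝒮 → 𝒜 → ℬ → ℝ)
    (D : Fin N → 𝒮 × 𝒜 × ℬ × 𝒮) (Q : 𝒮 → 𝒜 → ℬ → ℝ) :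
    TpePlus γ δ Cb N (cnt D) (Phat D) (rhat r D) (fun s a b => 1 / (1 - γ) - Q s a b) =
      fun s a b => 1 / (1 - γ) -
        lcbQ γ δ Cb 1 (fun s a b => 1 - r s a b) D (fun s => dualVal matVal (Q s)) s a b := by
  have hV : valQ (fun s a b => 1 / (1 - γ) - Q s a b) =
      fun s => 1 / (1 - γ) - dualVal matVal (Q s) :=
    funext fun s => isValueMap_matVal.const_sub _ (Q s)
  funext s a b
  have hp := Phat_mem_stdSimplex D s a b
  have hr : rhat r D s a b = 1 - rewardOr 1 (fun s a b => 1 - r s a b) D s a b := by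
    rw [rhat, rewardOr]
    split_ifs <;> ring
  rw [TpePlus, hV, penalty_congr (varP_const_sub hp _ _), Pexp_const_sub hp, lcbQ, lcbBackup,
    ← min_sub_sub_left, sub_zero, hr]
  congr 1
  linear_combination one_add_mul_one_div_one_sub hγ1

lemma QpePlus_eq (hγ1 : γ < 1) (δ Cb : ℝ) (r : 𝒮 → 𝒜 → ℬ → ℝ) (D : Fin N → 𝒮 × 𝒜 × ℬ × 𝒮) :
    QpePlus γ δ Cb r D = fun s a b => 1 / (1 - γ) -
      lcbQValue (dualVal matVal) γ δ Cb 1 (fun s a b => 1 - r s a b) D s a b := by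
  have hsemi : Function.Semiconj (fun (Q : 𝒮 → 𝒜 → ℬ → ℝ) s a b => 1 / (1 - γ) - Q s a b)
      (fun Q => lcbQ γ δ Cb 1 (fun s a b => 1 - r s a b) D fun s => dualVal matVal (Q s))
      (TpePlus γ δ Cb N (cnt D) (Phat D) (rhat r D)) :=
    fun Q => (TpePlus_const_sub hγ1 δ Cb r D Q).symm
  simpa only [QpePlus, lcbQValue, sub_zero] using
    ((hsemi.iterate_right (Titer γ N)).eq fun _ _ _ => 0).symm

lemma one_sub_le_dsProb_QpeMinus_le (hγ : 1 / 2 ≤ γ) (hγ1 : γ < 1) (hδ : δ ∈ Set.Ioo 0 1)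
    (hCb : 256 ≤ Cb) (hr : IsReward r) (hP : IsKernel P) (hdb : IsDist3 db) :
    1 - δ / 2 ≤ dsProb db P {D : Fin N → 𝒮 × 𝒜 × ℬ × 𝒮 | ∀ s a b,
      QpeMinus γ δ Cb r D s a b ≤ r s a b + γ * Pexp (P s a b) (valQ (QpeMinus γ δ Cb r D))} := by
  have hc : (0 : ℝ) ∈ Set.Icc 0 1 := Set.left_mem_Icc.2 zero_le_one
  exact (one_sub_le_dsProb_looConcentration isValueMap_matVal hγ hγ1 hδ (by linarith) hc hr hP
    hdb).trans (dsProb_mono hdb hP fun D hD =>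
      lcbQValue_le isValueMap_matVal hγ hγ1 hδ hCb hc hr hP hD)

lemma one_sub_le_dsProb_le_QpePlus (hγ : 1 / 2 ≤ γ) (hγ1 : γ < 1) (hδ : δ ∈ Set.Ioo 0 1)
    (hCb : 256 ≤ Cb) (hr : IsReward r) (hP : IsKernel P) (hdb : IsDist3 db) :
    1 - δ / 2 ≤ dsProb db P {D : Fin N → 𝒮 × 𝒜 × ℬ × 𝒮 | ∀ s a b,
      r s a b + γ * Pexp (P s a b) (valQ (QpePlus γ δ Cb r D)) ≤ QpePlus γ δ Cb r D s a b} := by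
  have hc : (1 : ℝ) ∈ Set.Icc 0 1 := Set.right_mem_Icc.2 zero_le_one
  have hval : IsValueMap (dualVal (matVal : (𝒜 → ℬ → ℝ) → ℝ)) := isValueMap_matVal.dualVal
  have hr' : IsReward fun s a b => 1 - r s a b := fun s a b =>
    ⟨sub_nonneg.2 (hr s a b).2, sub_le_self _ (hr s a b).1⟩
  refine (one_sub_le_dsProb_looConcentration hval hγ hγ1 hδ (by linarith) hc hr' hP hdb).trans
    (dsProb_mono hdb hP fun D hD s a b => ?_)
  have hV : valQ (QpePlus γ δ Cb r D) = fun s => 1 / (1 - γ) -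
      dualVal matVal (lcbQValue (dualVal matVal) γ δ Cb 1 (fun s a b => 1 - r s a b) D s) := by
    rw [QpePlus_eq hγ1]
    exact funext fun s => isValueMap_matVal.const_sub _ _
  rw [hV, Pexp_const_sub (hP s a b), QpePlus_eq hγ1]
  linarith [lcbQValue_le hval hγ hγ1 hδ hCb hc hr' hP hD s a b, one_add_mul_one_div_one_sub hγ1]

end ActionValue

/-! ### Policy evaluation -/

section ProductPolicy

variable {𝒮 𝒜 ℬ : Type} [Fintype 𝒜]

instance instNonemptyPolicy [Nonempty 𝒜] : Nonempty {μ : 𝒮 → 𝒜 → ℝ // IsPolicy μ} :=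
  let ⟨w⟩ := (inferInstance : Nonempty (stdSimplex ℝ 𝒜))
  ⟨⟨fun _ => w.1, fun _ => w.2⟩⟩

variable [Fintype 𝒮] [Fintype ℬ] {P : 𝒮 → 𝒜 → ℬ → 𝒮 → ℝ} {μ : 𝒮 → 𝒜 → ℝ} {ν : 𝒮 → ℬ → ℝ}

lemma Pexp_Pmat (P : 𝒮 → 𝒜 → ℬ → 𝒮 → ℝ) (μ : 𝒮 → 𝒜 → ℝ) (ν : 𝒮 → ℬ → ℝ) (V : 𝒮 → ℝ) (s : 𝒮) :
    Pexp (Pmat P μ ν s) V = pay (fun a b => Pexp (P s a b) V) (μ s) (ν s) := by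
  simp only [Pexp, Pmat, Matrix.of_apply, pay, Finset.sum_mul, Finset.mul_sum, mul_assoc]
  rw [Finset.sum_comm]
  exact Finset.sum_congr rfl fun a _ => Finset.sum_comm

lemma rPol_add_mul_Pexp (γ : ℝ) (P : 𝒮 → 𝒜 → ℬ → 𝒮 → ℝ) (r : 𝒮 → 𝒜 → ℬ → ℝ) (μ : 𝒮 → 𝒜 → ℝ)
    (ν : 𝒮 → ℬ → ℝ) (V : 𝒮 → ℝ) (s : 𝒮) :
    rPol r μ ν s + γ * Pexp (Pmat P μ ν s) V =
      pay (fun a b => r s a b + γ * Pexp (P s a b) V) (μ s) (ν s) := by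
  rw [Pexp_Pmat, pay_add, pay_const_mul]
  rfl

lemma Pmat_mem_stdSimplex (hP : IsKernel P) (hμ : IsPolicy μ) (hν : IsPolicy ν) (s : 𝒮) :
    Pmat P μ ν s ∈ stdSimplex ℝ 𝒮 := by
  refine ⟨fun t => Finset.sum_nonneg fun a _ => Finset.sum_nonneg fun b _ =>
    mul_nonneg (mul_nonneg ((hμ s).1 a) ((hν s).1 b)) ((hP s a b).1 t), ?_⟩
  have hone := Pexp_Pmat P μ ν (fun _ => 1) s
  simp only [Pexp_const (hP _ _ _), pay_const (hμ s) (hν s)] at hone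
  simpa only [Pexp, mul_one] using hone

end ProductPolicy

section Policy

variable {𝒮 𝒜 ℬ : Type} [Fintype 𝒮] {M : Matrix 𝒮 𝒮 ℝ} {f g W : 𝒮 → ℝ} {γ : ℝ}

lemma nonpos_of_le_mul_Pexp (hM : ∀ s, M s ∈ stdSimplex ℝ 𝒮) (hγ : 0 ≤ γ) (hγ1 : γ < 1)
    (h : ∀ s, f s ≤ γ * Pexp (M s) f) (s : 𝒮) : f s ≤ 0 := by
  have : Nonempty 𝒮 := ⟨s⟩
  obtain ⟨m, hm⟩ := Finite.exists_max f
  have hcontr : f m ≤ γ * f m :=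
    (h m).trans (mul_le_mul_of_nonneg_left (Pexp_le (hM m) hm) hγ)
  exact (hm s).trans (by nlinarith)

lemma le_of_sub_le_mul_Pexp (hM : ∀ s, M s ∈ stdSimplex ℝ 𝒮) (hγ : 0 ≤ γ) (hγ1 : γ < 1)
    (h : ∀ s, f s - γ * Pexp (M s) f ≤ g s - γ * Pexp (M s) g) (s : 𝒮) : f s ≤ g s :=
  sub_nonpos.1 <| nonpos_of_le_mul_Pexp (f := fun s => f s - g s) hM hγ hγ1
    (fun s => by rw [Pexp_sub]; linarith [h s]) s

variable [DecidableEq 𝒮]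

lemma one_sub_smul_mulVec (γ : ℝ) (M : Matrix 𝒮 𝒮 ℝ) (f : 𝒮 → ℝ) (s : 𝒮) :
    (1 - γ • M).mulVec f s = f s - γ * Pexp (M s) f := by
  rw [Matrix.sub_mulVec, Matrix.one_mulVec, Matrix.smul_mulVec]
  rfl

lemma isUnit_one_sub_smul (hM : ∀ s, M s ∈ stdSimplex ℝ 𝒮) (hγ : 0 ≤ γ) (hγ1 : γ < 1) :
    IsUnit (1 - γ • M) := by
  refine Matrix.mulVec_injective_iff_isUnit.1 fun f g hfg => funext fun s => ?_
  have heq : ∀ s, f s - γ * Pexp (M s) f = g s - γ * Pexp (M s) g := fun s => by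
    simpa only [one_sub_smul_mulVec] using congrFun hfg s
  exact le_antisymm (le_of_sub_le_mul_Pexp hM hγ hγ1 (fun s => (heq s).le) s)
    (le_of_sub_le_mul_Pexp hM hγ hγ1 (fun s => (heq s).ge) s)

variable [Fintype 𝒜] [Fintype ℬ] {P : 𝒮 → 𝒜 → ℬ → 𝒮 → ℝ} {r Q : 𝒮 → 𝒜 → ℬ → ℝ}
  {μ : 𝒮 → 𝒜 → ℝ} {ν : 𝒮 → ℬ → ℝ}

lemma Vpol_eq (hγ : 0 ≤ γ) (hγ1 : γ < 1) (hP : IsKernel P) (hμ : IsPolicy μ) (hν : IsPolicy ν)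
    (r : 𝒮 → 𝒜 → ℬ → ℝ) (s : 𝒮) :
    Vpol γ P r μ ν s =
      pay (fun a b => r s a b + γ * Pexp (P s a b) (Vpol γ P r μ ν)) (μ s) (ν s) := by
  have hunit := isUnit_one_sub_smul (Pmat_mem_stdSimplex hP hμ hν) hγ hγ1
  have hsolve : (1 - γ • Pmat P μ ν).mulVec (Vpol γ P r μ ν) = rPol r μ ν := by
    rw [Vpol, Matrix.mulVec_mulVec,
      Matrix.mul_nonsing_inv _ ((Matrix.isUnit_iff_isUnit_det _).1 hunit), Matrix.one_mulVec]
  rw [← rPol_add_mul_Pexp, ← hsolve, one_sub_smul_mulVec, sub_add_cancel]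

lemma le_Vpol (hγ : 0 ≤ γ) (hγ1 : γ < 1) (hP : IsKernel P) (hμ : IsPolicy μ) (hν : IsPolicy ν)
    (hW : ∀ s, W s ≤ pay (fun a b => r s a b + γ * Pexp (P s a b) W) (μ s) (ν s)) (s : 𝒮) :
    W s ≤ Vpol γ P r μ ν s := by
  refine le_of_sub_le_mul_Pexp (Pmat_mem_stdSimplex hP hμ hν) hγ hγ1 (fun s => ?_) s
  have hle := hW s
  have heq := Vpol_eq hγ hγ1 hP hμ hν r s
  rw [← rPol_add_mul_Pexp] at hle heq
  linarith

lemma Vpol_le (hγ : 0 ≤ γ) (hγ1 : γ < 1) (hP : IsKernel P) (hμ : IsPolicy μ) (hν : IsPolicy ν)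
    (hW : ∀ s, pay (fun a b => r s a b + γ * Pexp (P s a b) W) (μ s) (ν s) ≤ W s) (s : 𝒮) :
    Vpol γ P r μ ν s ≤ W s := by
  refine le_of_sub_le_mul_Pexp (Pmat_mem_stdSimplex hP hμ hν) hγ hγ1 (fun s => ?_) s
  have hle := hW s
  have heq := Vpol_eq hγ hγ1 hP hμ hν r s
  rw [← rPol_add_mul_Pexp] at hle heq
  linarith

variable [Nonempty ℬ]

lemma IsOutputMax.valQ_le_Vpol (hμ : IsOutputMax Q μ) (hγ : 0 ≤ γ) (hγ1 : γ < 1)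
    (hP : IsKernel P) (hν : IsPolicy ν)
    (hQ : ∀ s a b, Q s a b ≤ r s a b + γ * Pexp (P s a b) (valQ Q)) (s : 𝒮) :
    valQ Q s ≤ Vpol γ P r μ ν s := by
  choose z hz using hμ
  refine le_Vpol hγ hγ1 hP (fun s => (hz s).1) hν (fun s => ?_) s
  calc valQ Q s = pay (Q s) (μ s) (z s) := (hz s).matVal_eq
    _ ≤ pay (Q s) (μ s) (ν s) := (hz s).2.2.2 _ (hν s)
    _ ≤ _ := pay_mono (hz s).1 (hν s) (hQ s)

lemma IsOutputMin.Vpol_le_valQ (hν : IsOutputMin Q ν) (hγ : 0 ≤ γ) (hγ1 : γ < 1)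
    (hP : IsKernel P) (hμ : IsPolicy μ)
    (hQ : ∀ s a b, r s a b + γ * Pexp (P s a b) (valQ Q) ≤ Q s a b) (s : 𝒮) :
    Vpol γ P r μ ν s ≤ valQ Q s := by
  choose w hw using hν
  refine Vpol_le hγ hγ1 hP hμ (fun s => (hw s).2.1) (fun s => ?_) s
  calc _ ≤ pay (Q s) (μ s) (ν s) := pay_mono (hμ s) (hw s).2.1 (hQ s)
    _ ≤ pay (Q s) (w s) (ν s) := (hw s).2.2.1 _ (hμ s)
    _ = valQ Q s := (hw s).matVal_eq.symm

lemma IsOutputMax.valQ_le_VmuStar (hμ : IsOutputMax Q μ) (hγ : 0 ≤ γ) (hγ1 : γ < 1)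
    (hP : IsKernel P) (hQ : ∀ s a b, Q s a b ≤ r s a b + γ * Pexp (P s a b) (valQ Q)) (s : 𝒮) :
    valQ Q s ≤ VmuStar γ P r μ s :=
  le_ciInf fun ν => hμ.valQ_le_Vpol hγ hγ1 hP ν.2 hQ s

lemma IsOutputMax.le_QmuStar (hμ : IsOutputMax Q μ) (hγ : 0 ≤ γ) (hγ1 : γ < 1)
    (hP : IsKernel P) (hQ : ∀ s a b, Q s a b ≤ r s a b + γ * Pexp (P s a b) (valQ Q))
    (s : 𝒮) (a : 𝒜) (b : ℬ) : Q s a b ≤ QmuStar γ P r μ s a b := by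
  refine le_ciInf fun ν => (hQ s a b).trans ?_
  rw [Qpol]
  gcongr
  exact Pexp_mono (hP s a b).1 (hμ.valQ_le_Vpol hγ hγ1 hP ν.2 hQ)

variable [Nonempty 𝒜]

lemma IsOutputMin.VstarNu_le_valQ (hν : IsOutputMin Q ν) (hγ : 0 ≤ γ) (hγ1 : γ < 1)
    (hP : IsKernel P) (hQ : ∀ s a b, r s a b + γ * Pexp (P s a b) (valQ Q) ≤ Q s a b) (s : 𝒮) :
    VstarNu γ P r ν s ≤ valQ Q s :=
  ciSup_le fun μ => hν.Vpol_le_valQ hγ hγ1 hP μ.2 hQ s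

lemma IsOutputMin.QstarNu_le (hν : IsOutputMin Q ν) (hγ : 0 ≤ γ) (hγ1 : γ < 1)
    (hP : IsKernel P) (hQ : ∀ s a b, r s a b + γ * Pexp (P s a b) (valQ Q) ≤ Q s a b)
    (s : 𝒮) (a : 𝒜) (b : ℬ) : QstarNu γ P r ν s a b ≤ Q s a b := by
  refine ciSup_le fun μ => le_trans ?_ (hQ s a b)
  rw [Qpol]
  gcongr
  exact Pexp_mono (hP s a b).1 (hν.Vpol_le_valQ hγ hγ1 hP μ.2 hQ)

end Policy

end ZSMG

open ZSMG in
/-- Lemma 2, pessimism: with probability `1−δ`, the pessimistic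
Q and value estimates bracket the true quantities for every output of
VI-LCB-Game. -/
theorem statement7 :
    ∃ Cb : ℝ, 0 < Cb ∧
      ∀ (𝒮 𝒜 ℬ : Type) [Fintype 𝒮] [Fintype 𝒜] [Fintype ℬ]
        [DecidableEq 𝒮] [DecidableEq 𝒜] [DecidableEq ℬ]
        [Nonempty 𝒮] [Nonempty 𝒜] [Nonempty ℬ],
      ∀ γ δ : ℝ, 1 / 2 ≤ γ → γ < 1 → δ ∈ Set.Ioo (0 : ℝ) 1 →
      ∀ P : 𝒮 → 𝒜 → ℬ → 𝒮 → ℝ, IsKernel P →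
      ∀ r : 𝒮 → 𝒜 → ℬ → ℝ, IsReward r →
      ∀ db : 𝒮 → 𝒜 → ℬ → ℝ, IsDist3 db →
      ∀ N : ℕ,
        1 - δ ≤ dsProb db P {D : Fin N → 𝒮 × 𝒜 × ℬ × 𝒮 |
          ∀ (μh : 𝒮 → 𝒜 → ℝ) (νh : 𝒮 → ℬ → ℝ),
            IsOutputMax (QpeMinus γ δ Cb r D) μh →
            IsOutputMin (QpePlus γ δ Cb r D) νh →
              (∀ s a b, QpeMinus γ δ Cb r D s a b ≤ QmuStar γ P r μh s a b) ∧
              (∀ s a b, QstarNu γ P r νh s a b ≤ QpePlus γ δ Cb r D s a b) ∧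
              (∀ s, valQ (QpeMinus γ δ Cb r D) s ≤ VmuStar γ P r μh s) ∧
              (∀ s, VstarNu γ P r νh s ≤ valQ (QpePlus γ δ Cb r D) s)} := by
  refine ⟨256, by norm_num, ?_⟩
  intro 𝒮 𝒜 ℬ _ _ _ _ _ _ _ _ _ γ δ hγ hγ1 hδ P hP r hr db hdb N
  have hγ0 : 0 ≤ γ := by linarith
  have hlow := one_sub_le_dsProb_QpeMinus_le (N := N) hγ hγ1 hδ le_rfl hr hP hdb
  have hupp := one_sub_le_dsProb_le_QpePlus (N := N) hγ hγ1 hδ le_rfl hr hP hdb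
  have hboth := (sub_le_sub_right (add_le_add hlow hupp) 1).trans
    (dsProb_add_dsProb_sub_one_le_inter hdb hP _ _)
  refine (by linarith : 1 - δ ≤ _).trans (dsProb_mono hdb hP ?_)
  rintro D ⟨hDlow, hDupp⟩ μh νh hμ hν
  exact ⟨hμ.le_QmuStar hγ0 hγ1 hP hDlow, hν.QstarNu_le hγ0 hγ1 hP hDupp,
    hμ.valQ_le_VmuStar hγ0 hγ1 hP hDlow, hν.VstarNu_le_valQ hγ0 hγ1 hP hDupp⟩
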